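/- arXiv:2204.05865 — 2 statements merged into one kernel-verified Lean document; each statement's English description precedes it below -/
import Mathlib

section
/- Let F be a 2-factor of a 2-edge-connected cubic signed graph (G,σ). If F contains an even number of negative edges, then there exists a family F of sign-circuits of (G,σ) covering every edge of F, with total length at most (10/9)|E(G)|. -/
open SimpleGraph

variable {V : Type*}

/-- `σ e = true` means the edge `e` is negative. Number of negative edges in `E`. -/
noncomputable def negCount (σ : Sym2 V → Bool) (E : Set (Sym2 V)) : ℕ :=
  (E ∩ {e | σ e = true}).ncard

/-- Number of negative edges in a list of edges (with multiplicity). -/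
def listNegCount (σ : Sym2 V → Bool) (l : List (Sym2 V)) : ℕ :=
  (l.filter fun e => σ e).length

/-- A circuit: a connected `2`-regular subgraph. -/
def IsCircuit (G : SimpleGraph V) (C : G.Subgraph) : Prop :=
  C.Connected ∧ ∀ v ∈ C.verts, (C.neighborSet v).ncard = 2

/-- A balanced circuit: even number of negative edges. -/
def IsBalancedCircuit (G : SimpleGraph V) (σ : Sym2 V → Bool) (C : G.Subgraph) : Prop :=
  IsCircuit G C ∧ Even (negCount σ C.edgeSet)

/-- An unbalanced circuit: odd number of negative edges. -/
def IsUnbalancedCircuit (G : SimpleGraph V) (σ : Sym2 V → Bool) (C : G.Subgraph) : Prop :=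
  IsCircuit G C ∧ Odd (negCount σ C.edgeSet)

/-- `P` is the subgraph of a (possibly trivial) path from `u` to `v`. -/
def IsPathSubgraph (G : SimpleGraph V) (P : G.Subgraph) (u v : V) : Prop :=
  ∃ w : G.Walk u v, w.IsPath ∧ P.verts = {x | x ∈ w.support} ∧
    P.edgeSet = {e | e ∈ w.edges}

/-- A barbell: two unbalanced circuits joined by a (possibly trivial) path
meeting the circuits only at its ends. -/
def IsBarbell (G : SimpleGraph V) (σ : Sym2 V → Bool) (H : G.Subgraph) : Prop :=
  ∃ (C₁ C₂ P : G.Subgraph) (u v : V),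
    IsUnbalancedCircuit G σ C₁ ∧ IsUnbalancedCircuit G σ C₂ ∧
    IsPathSubgraph G P u v ∧ u ∈ C₁.verts ∧ v ∈ C₂.verts ∧
    P.verts ∩ C₁.verts = {u} ∧ P.verts ∩ C₂.verts = {v} ∧
    C₁.verts ∩ C₂.verts ⊆ {u} ∩ {v} ∧
    C₁.edgeSet ∩ C₂.edgeSet = ∅ ∧
    H = C₁ ⊔ C₂ ⊔ P

/-- A sign-circuit: a balanced circuit or a barbell. -/
def IsSignCircuit (G : SimpleGraph V) (σ : Sym2 V → Bool) (H : G.Subgraph) : Prop :=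
  IsBalancedCircuit G σ H ∨ IsBarbell G σ H

/-- Flow-admissible: every edge lies in a sign-circuit (equivalently, the signed
graph admits a nowhere-zero integer flow). -/
def FlowAdmissible (G : SimpleGraph V) (σ : Sym2 V → Bool) : Prop :=
  ∀ e ∈ G.edgeSet, ∃ H : G.Subgraph, IsSignCircuit G σ H ∧ e ∈ H.edgeSet

/-- Total length of a family of subgraphs. -/
noncomputable def coverLength (G : SimpleGraph V) (𝓕 : Multiset G.Subgraph) : ℕ :=
  (𝓕.map fun H => H.edgeSet.ncard).sum

/-- The family `𝓕` covers the edge set `E`. -/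
def Covers (G : SimpleGraph V) (𝓕 : Multiset G.Subgraph) (E : Set (Sym2 V)) : Prop :=
  ∀ e ∈ E, ∃ H ∈ 𝓕, e ∈ H.edgeSet

/-- Cubic graph: every vertex has degree `3`. -/
def IsCubic (G : SimpleGraph V) : Prop := ∀ v : V, (G.neighborSet v).ncard = 3

/-- `2`-edge-connected: connected and bridgeless. -/
def TwoEdgeConnected (G : SimpleGraph V) : Prop :=
  G.Connected ∧ ∀ e, ¬ G.IsBridge e

/-- Balanced signed graph: every circuit has an even number of negative edges. -/
def IsBalancedGraph (G : SimpleGraph V) (σ : Sym2 V → Bool) : Prop :=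
  ∀ C : G.Subgraph, IsCircuit G C → Even (negCount σ C.edgeSet)

/-- A `2`-factor: a spanning `2`-regular subgraph. -/
def IsTwoFactor (G : SimpleGraph V) (F : G.Subgraph) : Prop :=
  F.IsSpanning ∧ ∀ v : V, (F.neighborSet v).ncard = 2

/-- A proper 3-edge-coloring: edges sharing a vertex get different colors. -/
def Proper3EdgeColoring (G : SimpleGraph V) (c : Sym2 V → Fin 3) : Prop :=
  ∀ e ∈ G.edgeSet, ∀ f ∈ G.edgeSet, e ≠ f → (∃ x, x ∈ e ∧ x ∈ f) → c e ≠ c f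

/-- 3-edge-colorable graph. -/
def ThreeEdgeColorable (G : SimpleGraph V) : Prop :=
  ∃ c : Sym2 V → Fin 3, Proper3EdgeColoring G c

/-- `S` is a segment of the circuit `C` determined by a set `Mv` of vertices
(the vertex set of a component `M`): a maximal subpath of `C` whose endpoints
are attachments of `M` and whose internal vertices are not in `M`. -/
def IsSegment (G : SimpleGraph V) (C : G.Subgraph) (Mv : Set V) (S : G.Subgraph) : Prop :=
  ∃ (a b : V) (w : G.Walk a b),
    w.edges ≠ [] ∧ w.support.tail.Nodup ∧
    (∀ e ∈ w.edges, e ∈ C.edgeSet) ∧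
    a ∈ Mv ∧ b ∈ Mv ∧
    (∀ x ∈ w.support, x ∈ Mv → x = a ∨ x = b) ∧
    S.verts = {x | x ∈ w.support} ∧ S.edgeSet = {e | e ∈ w.edges}

/-!
Contract the circuits of the 2-factor: the remaining edges of the cubic graph, which form a perfect
matching, become the edges of a multigraph whose darts are the vertices of `G`, and each contracted
circuit orders the darts at its vertex cyclically. The number of unbalanced circuits is even, so
this connected multigraph has a `T`-join for the set `T` of unbalanced circuits; a smallest one `J`
is a forest, and since the multigraph is bridgeless it has at most half of the edges. Two families
cover the 2-factor.

* In each circuit meeting at least two edges of `J`, select every other arc between `J`-edges in one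
  of the two complementary ways, the shorter one. With `J` the arcs form a subgraph with one odd
  vertex on each unbalanced circuit; it splits into paths pairing these circuits into barbells, and
  the balanced circuits are taken themselves.
* Walk around the boundary of the forest `J` thickened along the circuits. Cut at the circuits that
  are leaves of `J`, this boundary falls into paths that join consecutive leaves into barbells and
  together cover all other circuits meeting `J`; the circuits missing `J` are balanced.

Let `n = |V|`, let `s ≤ n / 2` be the number of vertices matched by `J`, and let `i`, `e`, `f` be
the numbers of vertices on circuits incident with at least two, exactly one and no edges of `J`. The
two lengths are at most `n + (s + i) / 2` and `s + i + 2 e + f`; their mean with weights `2 / 3` and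
`1 / 3` is at most `(4 n + 2 s) / 3 ≤ 5 n / 3 = (10 / 9) |E|`.
-/

section FinsetSum

variable {α A : Type*} [Fintype α] [DecidableEq α] [AddCommGroup A]

lemma mem_of_forall_single_sub_single_mem {W : AddSubgroup (α → A)} {r : α → α}
    (hW : ∀ x a, Pi.single x a - Pi.single (r x) a ∈ W) {p : α → A}
    (hp : ∀ y, ∑ x with r x = y, p x = 0) : p ∈ W := by
  have hr : ∑ x, Pi.single (r x) (p x) = (0 : α → A) := by
    ext y
    rw [Finset.sum_apply, Pi.zero_apply, ← hp y, Finset.sum_filter]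
    exact Finset.sum_congr rfl fun x _ => by rw [Pi.single_apply]; simp only [eq_comm]
  have hsum : ∑ x, (Pi.single x (p x) - Pi.single (r x) (p x)) = p := by
    rw [Finset.sum_sub_distrib, hr, sub_zero, Finset.univ_sum_single]
  exact hsum ▸ W.sum_mem fun x _ => hW x (p x)

lemma exists_sub_comp_symm_eq (π : Equiv.Perm α) {q : α → A}
    (hq : ∀ y, ∑ x with π.SameCycle x y, q x = 0) :
    ∃ ξ : α → A, ∀ x, ξ x - ξ (π.symm x) = q x := by
  let δ : (α → A) →+ (α → A) :=
    AddMonoidHom.mk' (fun ξ x => ξ x - ξ (π.symm x)) fun ξ η => by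
      ext x
      simp only [Pi.add_apply]
      abel
  have hδ : ∀ x a, δ (Pi.single x a) = Pi.single x a - Pi.single (π x) a := by
    intro x a
    ext y
    simp only [δ, AddMonoidHom.mk'_apply, Pi.sub_apply, Pi.single_apply, Equiv.symm_apply_eq]
  have hpow : ∀ (k : ℕ) x a, Pi.single x a - Pi.single ((π ^ k) x) a ∈ δ.range := by
    intro k x a
    induction k with
    | zero => simp
    | succ k ih =>
      have h := add_mem ih ⟨_, hδ ((π ^ k) x) a⟩
      rwa [sub_add_sub_cancel, ← Equiv.Perm.mul_apply, ← pow_succ'] at h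
  let s := Equiv.Perm.SameCycle.setoid π
  let r : α → α := fun x => (Quotient.mk s x).out
  have hr : ∀ x, π.SameCycle x (r x) := fun x => Setoid.symm (Quotient.mk_out (s := s) x)
  have hrr : ∀ x y, π.SameCycle x y → r x = r y := fun x y h => by
    simp only [r, Quotient.sound (s := s) h]
  obtain ⟨ξ, hξ⟩ : q ∈ δ.range := by
    refine mem_of_forall_single_sub_single_mem (r := r) (fun x a => ?_) fun y => ?_
    · obtain ⟨k, -, hk⟩ := (hr x).exists_pow_eq'
      exact hk ▸ hpow k x a
    · by_cases hy : r y = y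
      · rw [← hq y]
        congr! 2 with x
        exact ⟨fun h => h ▸ hr x, fun h => (hrr x y h).trans hy⟩
      · rw [Finset.filter_false_of_mem, Finset.sum_empty]
        rintro x - rfl
        exact hy (hrr _ _ (hr x)).symm
  exact ⟨ξ, fun x => congrFun hξ x⟩

end FinsetSum

section HammingNorm

open scoped Finset

variable {α : Type*}

lemma zmod_two_ne_zero_iff {a : ZMod 2} : a ≠ 0 ↔ a = 1 := by
  revert a; decide

lemma sub_eq_add_of_zmod_two (p q : α → ZMod 2) : p - q = p + q :=
  funext fun _ => CharTwo.sub_eq_add _ _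

variable [Fintype α]

lemma hammingNorm_eq_card_eq_one (j : α → ZMod 2) : hammingNorm j = #{x | j x = 1} := by
  simp only [hammingNorm, zmod_two_ne_zero_iff]

/-- Translation by `z` pairs off the members vanishing at `x` with those that do not, so an average
member vanishes at half of the coordinates. -/
lemma exists_two_mul_hammingNorm_le_card {𝒥 : Finset (α → ZMod 2)} (hne : 𝒥.Nonempty)
    (h : ∀ x, ∃ z : α → ZMod 2, z x = 1 ∧ ∀ k ∈ 𝒥, k + z ∈ 𝒥) :
    ∃ k ∈ 𝒥, 2 * hammingNorm k ≤ Fintype.card α := by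
  have hhalf : ∀ x, 2 * #{k ∈ 𝒥 | k x = 1} ≤ #𝒥 := by
    intro x
    obtain ⟨z, hzx, hz⟩ := h x
    have hle : #{k ∈ 𝒥 | k x = 1} ≤ #{k ∈ 𝒥 | ¬ k x = 1} := by
      refine Finset.card_le_card_of_injOn (· + z) (fun k hk => ?_) ((add_left_injective z).injOn)
      simp only [Finset.coe_filter, Set.mem_ofPred_eq] at hk ⊢
      exact ⟨hz k hk.1, by rw [Pi.add_apply, hk.2, hzx]; decide⟩
    have := 𝒥.card_filter_add_card_filter_not (fun k => k x = 1)
    omega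
  have hsum : ∑ k ∈ 𝒥, 2 * hammingNorm k ≤ ∑ _k ∈ 𝒥, Fintype.card α := by
    calc ∑ k ∈ 𝒥, 2 * hammingNorm k = ∑ x, 2 * #{k ∈ 𝒥 | k x = 1} := by
          simp only [hammingNorm_eq_card_eq_one, Finset.card_filter, ← Finset.mul_sum]
          rw [Finset.sum_comm]
      _ ≤ ∑ _x : α, #𝒥 := Finset.sum_le_sum fun x _ => hhalf x
      _ = ∑ _k ∈ 𝒥, Fintype.card α := by simp [mul_comm]
  exact Finset.exists_le_of_sum_le hne hsum

end HammingNorm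

section Trails

open scoped Classical Finset

variable [Fintype V] (Y : SimpleGraph V) {u v : V}

lemma exists_ne_odd_degree_reachable (hu : Odd (Y.degree u)) :
    ∃ v, v ≠ u ∧ Odd (Y.degree v) ∧ Y.Reachable u v := by
  let Z : SimpleGraph V :=
    { Adj := fun a b => Y.Adj a b ∧ Y.Reachable u a
      symm := ⟨fun a b h => ⟨h.1.symm, h.2.trans h.1.reachable⟩⟩
      loopless := ⟨fun a h => h.1.ne rfl⟩ }
  have hZ : ∀ a, Y.Reachable u a → Z.degree a = Y.degree a := by
    intro a ha
    rw [← card_neighborFinset_eq_degree, ← card_neighborFinset_eq_degree]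
    congr 1
    ext b
    simp [Z, ha]
  obtain ⟨v, hvu, hv⟩ := Z.exists_ne_odd_degree_of_exists_odd_degree u (by rwa [hZ u (.refl _)])
  obtain ⟨b, hb⟩ := (degree_pos_iff_exists_adj _ _).1 hv.pos
  exact ⟨v, hvu, by rwa [← hZ v hb.2], hb.2⟩

variable {Y}

lemma card_filter_edgeFinset_deleteEdges_add_countP {p : Y.Walk u v} (hp : p.IsTrail)
    (P : Sym2 V → Prop) [DecidablePred P] :
    #{e ∈ (Y.deleteEdges {e | e ∈ p.edges}).edgeFinset | P e} + p.edges.countP (fun e => P e) =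
      #{e ∈ Y.edgeFinset | P e} := by
  rw [List.countP_eq_length_filter, ← List.toFinset_card_of_nodup (hp.edges_nodup.filter _),
    ← Finset.card_union_of_disjoint]
  · congr 1
    ext e
    have := fun h : e ∈ p.edges => p.edges_subset_edgeSet h
    simp only [Finset.mem_union, Finset.mem_filter, mem_edgeFinset, edgeSet_deleteEdges,
      Set.mem_sdiff, Set.mem_ofPred_eq, List.mem_toFinset, List.mem_filter, decide_eq_true_eq]
    tauto
  · rw [Finset.disjoint_left]
    intro e
    simp only [Finset.mem_filter, mem_edgeFinset, edgeSet_deleteEdges, Set.mem_sdiff,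
      Set.mem_ofPred_eq, List.mem_toFinset, List.mem_filter]
    tauto

lemma card_edgeFinset_deleteEdges_add_length {p : Y.Walk u v} (hp : p.IsTrail) :
    #(Y.deleteEdges {e | e ∈ p.edges}).edgeFinset + p.length = #Y.edgeFinset := by
  simpa using card_filter_edgeFinset_deleteEdges_add_countP hp fun _ => True

lemma odd_degree_deleteEdges_iff {p : Y.Walk u v} (hp : p.IsTrail) (x : V) :
    Odd ((Y.deleteEdges {e | e ∈ p.edges}).degree x) ↔
      (Odd (Y.degree x) ↔ u ≠ v → x ≠ u ∧ x ≠ v) := by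
  have h := card_filter_edgeFinset_deleteEdges_add_countP hp (x ∈ ·)
  rw [← incidenceFinset_eq_filter, ← incidenceFinset_eq_filter, card_incidenceFinset_eq_degree,
    card_incidenceFinset_eq_degree] at h
  rw [← h, Nat.odd_add, ← hp.even_countP_edges_iff]
  tauto

lemma exists_walk_odd_degree_iff (hu : Odd (Y.degree u)) :
    ∃ v, v ≠ u ∧ Odd (Y.degree v) ∧ ∃ (p : Y.Walk u v) (Y' : SimpleGraph V), Y' ≤ Y ∧
      #Y'.edgeFinset + p.length = #Y.edgeFinset ∧
        ∀ x, Odd (Y'.degree x) ↔ Odd (Y.degree x) ∧ x ≠ u ∧ x ≠ v := by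
  obtain ⟨v, hvu, hv, ⟨w⟩⟩ := exists_ne_odd_degree_reachable Y hu
  have hp : w.bypass.IsTrail := w.bypass_isPath.isTrail
  refine ⟨v, hvu, hv, w.bypass, Y.deleteEdges {e | e ∈ w.bypass.edges},
    Y.deleteEdges_le _, ?_, fun x => ?_⟩
  · convert card_edgeFinset_deleteEdges_add_length hp
  · have hxu : x = u → Odd (Y.degree x) := fun h => h ▸ hu
    have hxv : x = v → Odd (Y.degree x) := fun h => h ▸ hv
    have huv := hvu.symm
    have hiff : (Odd (Y.degree x) ↔ u ≠ v → x ≠ u ∧ x ≠ v) ↔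
        Odd (Y.degree x) ∧ x ≠ u ∧ x ≠ v := by tauto
    convert (odd_degree_deleteEdges_iff hp x).trans hiff

omit [Fintype V] in
lemma exists_isPath_support_inter {A B : Set V} (hu : u ∈ A) (hv : v ∈ B) (w : Y.Walk u v) :
    ∃ a ∈ A, ∃ b ∈ B, ∃ p : Y.Walk a b, p.IsPath ∧ p.length ≤ w.length ∧
      (∀ x ∈ p.support, x ∈ A → x = a) ∧ ∀ x ∈ p.support, x ∈ B → x = b := by
  have hex : ∃ n, ∃ a ∈ A, ∃ b ∈ B, ∃ p : Y.Walk a b, p.length = n := ⟨_, u, hu, v, hv, w, rfl⟩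
  obtain ⟨a, ha, b, hb, p, hp⟩ := Nat.find_spec hex
  have hmin : ∀ a' ∈ A, ∀ b' ∈ B, ∀ q : Y.Walk a' b', p.length ≤ q.length :=
    fun a' ha' b' hb' q => hp ▸ Nat.find_min' hex ⟨a', ha', b', hb', q, rfl⟩
  have hlen := p.length_bypass_le_length
  refine ⟨a, ha, b, hb, p.bypass, p.bypass_isPath, hlen.trans (hmin u hu v hv w),
    fun x hx hxA => ?_, fun x hx hxB => ?_⟩
  all_goals
    have hsplit := congrArg Walk.length (p.bypass.take_spec hx)
    rw [Walk.length_append] at hsplit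
  · have := hmin x hxA b hb (p.bypass.dropUntil x hx)
    exact (Walk.eq_of_length_eq_zero (p := p.bypass.takeUntil x hx) (by omega)).symm
  · have := hmin a ha x hxB (p.bypass.takeUntil x hx)
    exact Walk.eq_of_length_eq_zero (p := p.bypass.dropUntil x hx) (by omega)

end Trails

section Orientation

variable {H : SimpleGraph V}

lemma exists_perm_adj_of_isCycle {u : V} {p : H.Walk u u} (hp : p.IsCycle) :
    ∃ π : Equiv.Perm V, ∀ x ∈ p.support, π x ∈ p.support ∧ H.Adj x (π x) ∧ π (π x) ≠ x := by
  classical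
  have h3 := hp.three_le_length
  have hlen : p.support.tail.length = p.length := by simp
  have hget : ∀ i (hi : i < p.support.tail.length), p.support.tail[i] = p.getVert (i + 1) :=
    fun i hi => by rw [List.getElem_tail, p.support_getElem_eq_getVert]
  refine ⟨p.support.tail.formPerm, fun x hx => ?_⟩
  have hx' : x ∈ p.support.tail := by
    rcases p.mem_support_iff.1 hx with rfl | h
    exacts [p.end_mem_tail_support hp.not_nil, h]
  refine ⟨List.mem_of_mem_tail (List.formPerm_apply_mem_of_mem hx'), ?_⟩
  obtain ⟨i, hi, rfl⟩ := List.getElem_of_mem hx'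
  rw [List.formPerm_apply_getElem _ hp.support_nodup,
    List.formPerm_apply_getElem _ hp.support_nodup, Ne,
    hp.support_nodup.getElem_inj_iff, Nat.mod_add_mod, hget, hget]
  constructor
  · rcases (show i + 1 ≤ p.support.tail.length from hi).lt_or_eq with h | h
    · rw [hlen] at h
      rw [hlen, Nat.mod_eq_of_lt h]
      exact p.adj_getVert_succ h
    · rw [h, Nat.mod_self, hlen, p.getVert_length]
      simpa using p.adj_getVert_succ (i := 0) (by omega)
  · rw [hlen] at hi ⊢
    rcases lt_or_ge (i + 2) p.length with h | h
    · rw [Nat.mod_eq_of_lt h]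
      omega
    · rw [Nat.mod_eq_sub_mod h, Nat.mod_eq_of_lt (by omega)]
      omega

theorem exists_perm_adj_of_ncard_neighborSet_eq_two [Finite V]
    (hH : ∀ v, (H.neighborSet v).ncard = 2) :
    ∃ π : Equiv.Perm V, (∀ x, H.Adj x (π x)) ∧ ∀ x, π (π x) ≠ x := by
  have hcycle : ∀ c : H.ConnectedComponent, ∃ π : Equiv.Perm V, ∀ x ∈ c.supp,
      π x ∈ c.supp ∧ H.Adj x (π x) ∧ π (π x) ≠ x := by
    intro c
    obtain ⟨v, hv⟩ := c.nonempty_supp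
    have hcyc : H.IsCycles := fun v _ => hH v
    obtain ⟨p, hp, hpc⟩ := hcyc.exists_cycle_toSubgraph_verts_eq_connectedComponentSupp hv
      (Set.nonempty_of_ncard_ne_zero (by rw [hH v]; decide))
    obtain ⟨π, hπ⟩ := exists_perm_adj_of_isCycle hp
    exact ⟨π, by simpa only [← hpc, Walk.mem_verts_toSubgraph] using hπ⟩
  choose π hπ using hcycle
  let f : V → V := fun x => π (H.connectedComponentMk x) x
  have hcomp : ∀ x, H.connectedComponentMk (f x) = H.connectedComponentMk x :=
    fun x => (hπ _ x rfl).1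
  have hf : Function.Injective f := by
    intro x y hxy
    have h : H.connectedComponentMk x = H.connectedComponentMk y := by
      rw [← hcomp x, hxy, hcomp]
    simp only [f, h] at hxy
    exact (π _).injective hxy
  refine ⟨.ofBijective f (Finite.injective_iff_bijective.1 hf), fun x => (hπ _ x rfl).2.1,
    fun x => ?_⟩
  simp only [Equiv.ofBijective_apply]
  rw [show f (f x) = π (H.connectedComponentMk x) (f x) from
    congrArg (fun c => π c (f x)) (hcomp x)]
  exact (hπ _ x rfl).2.2

end Orientation

section SignCover

variable {G : SimpleGraph V} {σ : Sym2 V → Bool}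

variable (G σ) in
/-- The edge set `E` is covered by a family of sign-circuits of total length at most `n`. -/
def HasSignCover (E : Set (Sym2 V)) (n : ℕ) : Prop :=
  ∃ 𝓕 : Multiset G.Subgraph, (∀ H ∈ 𝓕, IsSignCircuit G σ H) ∧ Covers G 𝓕 E ∧ coverLength G 𝓕 ≤ n

lemma hasSignCover_empty : HasSignCover G σ ∅ 0 :=
  ⟨0, fun _ h => absurd h (Multiset.notMem_zero _), fun _ h => h.elim, le_rfl⟩

lemma IsSignCircuit.hasSignCover {H : G.Subgraph} (hH : IsSignCircuit G σ H) :
    HasSignCover G σ H.edgeSet H.edgeSet.ncard :=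
  ⟨{H}, by simpa using hH, fun _ he => ⟨H, Multiset.mem_singleton_self H, he⟩,
    by simp [coverLength]⟩

namespace HasSignCover

lemma mono {E E' : Set (Sym2 V)} {n n' : ℕ} (h : HasSignCover G σ E n) (hE : E' ⊆ E)
    (hn : n ≤ n') : HasSignCover G σ E' n' :=
  let ⟨𝓕, hsign, hcov, hlen⟩ := h
  ⟨𝓕, hsign, fun e he => hcov e (hE he), hlen.trans hn⟩

protected lemma min {E : Set (Sym2 V)} {n n' : ℕ} (h : HasSignCover G σ E n)
    (h' : HasSignCover G σ E n') : HasSignCover G σ E (min n n') := by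
  rcases min_choice n n' with hmin | hmin <;> rwa [hmin]

lemma union {E E' : Set (Sym2 V)} {n n' : ℕ} (h : HasSignCover G σ E n)
    (h' : HasSignCover G σ E' n') : HasSignCover G σ (E ∪ E') (n + n') := by
  obtain ⟨𝓕, hsign, hcov, hlen⟩ := h
  obtain ⟨𝓕', hsign', hcov', hlen'⟩ := h'
  refine ⟨𝓕 + 𝓕', fun H hH => (Multiset.mem_add.1 hH).elim (hsign H) (hsign' H), ?_, ?_⟩
  · rintro e (he | he)
    · obtain ⟨H, hH, heH⟩ := hcov e he
      exact ⟨H, Multiset.mem_add.2 (.inl hH), heH⟩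
    · obtain ⟨H, hH, heH⟩ := hcov' e he
      exact ⟨H, Multiset.mem_add.2 (.inr hH), heH⟩
  · rw [coverLength, Multiset.map_add, Multiset.sum_add]
    exact add_le_add hlen hlen'

lemma biUnion {ι : Type*} {s : Finset ι} {E : ι → Set (Sym2 V)} {n : ι → ℕ}
    (h : ∀ i ∈ s, HasSignCover G σ (E i) (n i)) :
    HasSignCover G σ (⋃ i ∈ s, E i) (∑ i ∈ s, n i) := by
  classical
  induction s using Finset.induction_on with
  | empty => simpa using hasSignCover_empty
  | insert i s hi ih =>
    rw [Finset.set_biUnion_insert, Finset.sum_insert hi]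
    exact (h i (Finset.mem_insert_self i s)).union
      (ih fun k hk => h k (Finset.mem_insert_of_mem hk))

end HasSignCover

end SignCover

/-- A multigraph with vertex set `C`, encoded by its set `V` of darts (half-edges): each dart starts
at the vertex `base`, and `mate` reverses it. -/
structure DartGraph (V C : Type*) where
  mate : V → V
  base : V → C
  mate_mate : ∀ x, mate (mate x) = x
  mate_ne : ∀ x, mate x ≠ x

namespace DartGraph

open scoped Classical Finset

variable {C : Type*} (D : DartGraph V C)

lemma mate_injective : Function.Injective D.mate :=
  Function.LeftInverse.injective D.mate_mate

lemma mate_eq_comm {x y : V} : D.mate x = y ↔ x = D.mate y :=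
  ⟨fun h => by rw [← h, D.mate_mate], fun h => by rw [h, D.mate_mate]⟩

/-- The edge sets contained in `A`, as mate-invariant vectors modulo 2. -/
def edgeSpace (A : Set V) : AddSubgroup (V → ZMod 2) where
  carrier := {j | (∀ x, j (D.mate x) = j x) ∧ ∀ x ∉ A, j x = 0}
  zero_mem' := ⟨fun _ => rfl, fun _ _ => rfl⟩
  add_mem' := fun ha hb => ⟨fun x => by simp only [Pi.add_apply, ha.1, hb.1],
    fun x hx => by simp only [Pi.add_apply, ha.2 x hx, hb.2 x hx, add_zero]⟩
  neg_mem' := fun ha => ⟨fun x => by simp only [Pi.neg_apply, ha.1],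
    fun x hx => by simp only [Pi.neg_apply, ha.2 x hx, neg_zero]⟩

lemma edgeSpace_mono {A B : Set V} (h : A ⊆ B) : D.edgeSpace A ≤ D.edgeSpace B :=
  fun _ hj => ⟨hj.1, fun x hx => hj.2 x fun hA => hx (h hA)⟩

/-- The edge of a dart, as a vector modulo 2. -/
noncomputable def edgeVector (x : V) : V → ZMod 2 := Pi.single x 1 + Pi.single (D.mate x) 1

lemma edgeVector_apply (x y : V) :
    D.edgeVector x y = if y ∈ ({x, D.mate x} : Set V) then 1 else 0 := by
  by_cases hx : y = x
  · simp [edgeVector, hx, (D.mate_ne x).symm]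
  · simp [edgeVector, hx, Pi.single_apply]

lemma edgeVector_mem {A : Set V} {x : V} (hx : x ∈ A) (hx' : D.mate x ∈ A) :
    D.edgeVector x ∈ D.edgeSpace A := by
  refine ⟨fun y => ?_, fun y hy => ?_⟩
  · simp only [edgeVector_apply, Set.mem_insert_iff, Set.mem_singleton_iff, D.mate_eq_comm,
      D.mate_mate, or_comm]
  · rw [edgeVector_apply, if_neg]
    rintro (rfl | rfl)
    exacts [hy hx, hy hx']

/-- The vertices `c` and `d` are joined by a walk all of whose darts lie in `A`. -/
def Linked (A : Set V) : C → C → Prop :=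
  Relation.ReflTransGen fun c d => ∃ x ∈ A, D.base x = c ∧ D.base (D.mate x) = d

variable {D} in
lemma mapsTo_mate_sdiff_pair {A : Set V} (hA : Set.MapsTo D.mate A A) (x : V) :
    Set.MapsTo D.mate (A \ {x, D.mate x}) (A \ {x, D.mate x}) := by
  rintro y ⟨hy, hyx⟩
  refine ⟨hA hy, ?_⟩
  rintro (h | h)
  · exact hyx (.inr (D.mate_eq_comm.1 h))
  · exact hyx (.inl (D.mate_injective h))

section Boundary

variable [Fintype V]

/-- The mod 2 boundary: the parity at each vertex of the darts starting there. -/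
noncomputable def boundary : (V → ZMod 2) →+ (C → ZMod 2) :=
  AddMonoidHom.mk' (fun j c => ∑ x with D.base x = c, j x) fun _ _ =>
    funext fun _ => Finset.sum_add_distrib

lemma boundary_apply (j : V → ZMod 2) (c : C) :
    D.boundary j c = ∑ x with D.base x = c, j x := rfl

lemma sum_boundary [Fintype C] (j : V → ZMod 2) : ∑ c, D.boundary j c = ∑ x, j x :=
  Finset.sum_fiberwise _ _ _

lemma boundary_single (x : V) : D.boundary (Pi.single x 1) = Pi.single (D.base x) 1 := by
  ext c
  simp [boundary_apply, Pi.single_apply, Finset.sum_ite_eq, Finset.mem_filter, eq_comm]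

lemma boundary_edgeVector (x : V) :
    D.boundary (D.edgeVector x) = Pi.single (D.base x) 1 - Pi.single (D.base (D.mate x)) 1 := by
  rw [edgeVector, map_add, boundary_single, boundary_single, sub_eq_add_of_zmod_two]

variable {D}

lemma Linked.single_sub_single_mem {A : Set V} (hA : Set.MapsTo D.mate A A) {c d : C}
    (h : D.Linked A c d) :
    Pi.single c 1 - Pi.single d 1 ∈ (D.edgeSpace A).map D.boundary := by
  induction h with
  | refl => simp only [sub_self, zero_mem]
  | tail _ hstep ih =>
    obtain ⟨x, hx, rfl, rfl⟩ := hstep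
    simpa using add_mem ih ⟨_, D.edgeVector_mem hx (hA hx), D.boundary_edgeVector x⟩

lemma mem_map_boundary_of_forall_linked [Fintype C] (hD : ∀ c d, D.Linked Set.univ c d)
    {p : C → ZMod 2} (hp : ∑ c, p c = 0) : p ∈ (D.edgeSpace Set.univ).map D.boundary := by
  rcases isEmpty_or_nonempty C with hC | ⟨⟨r⟩⟩
  · exact Subsingleton.elim 0 p ▸ zero_mem _
  refine mem_of_forall_single_sub_single_mem (r := fun _ => r) (fun c a => ?_) fun d => ?_
  · rcases eq_or_ne a 0 with rfl | ha
    · simp only [Pi.single_zero, sub_self, zero_mem]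
    · exact zmod_two_ne_zero_iff.1 ha ▸
        (hD c r).single_sub_single_mem (Set.mapsTo_univ _ _)
  · by_cases hd : r = d
    · simpa only [hd, Finset.filter_true] using hp
    · simp [hd]

lemma exists_cycle_of_linked {A : Set V} {x : V} (hA : Set.MapsTo D.mate A A)
    (h : D.Linked (A \ {x, D.mate x}) (D.base x) (D.base (D.mate x))) :
    ∃ z ∈ D.edgeSpace (A ∪ {x, D.mate x}), D.boundary z = 0 ∧ z x = 1 := by
  obtain ⟨k, hk, hkb⟩ := h.single_sub_single_mem (mapsTo_mate_sdiff_pair hA x)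
  refine ⟨k - D.edgeVector x, sub_mem (D.edgeSpace_mono ?_ hk) (D.edgeVector_mem ?_ ?_), ?_, ?_⟩
  · exact Set.sdiff_subset.trans Set.subset_union_left
  · exact .inr (.inl rfl)
  · exact .inr (.inr rfl)
  · rw [map_sub, hkb, boundary_edgeVector, sub_self]
  · rw [Pi.sub_apply, hk.2 x (fun hx => hx.2 (.inl rfl)), edgeVector_apply, if_pos (.inl rfl)]
    decide

variable (D) in
/-- The `p`-joins of the multigraph: the edge sets with prescribed parities `p` at the vertices. -/
structure IsJoin (p : C → ZMod 2) (j : V → ZMod 2) : Prop where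
  mate : ∀ x, j (D.mate x) = j x
  boundary_eq : D.boundary j = p

lemma IsJoin.add_cycle {p : C → ZMod 2} {j z : V → ZMod 2} (hj : D.IsJoin p j) {A : Set V}
    (hz : z ∈ D.edgeSpace A) (hzb : D.boundary z = 0) : D.IsJoin p (j + z) :=
  ⟨fun x => by rw [Pi.add_apply, Pi.add_apply, hj.mate, hz.1],
    by rw [map_add, hj.boundary_eq, hzb, add_zero]⟩

variable (D) in
/-- The edge set `j` contains no circuit: each of its edges is a bridge. -/
def IsForest (j : V → ZMod 2) : Prop :=
  ∀ x, j x = 1 → ¬ D.Linked ({y | j y = 1} \ {x, D.mate x}) (D.base x) (D.base (D.mate x))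

lemma IsJoin.isForest_of_forall_le {p : C → ZMod 2} {j : V → ZMod 2} (hj : D.IsJoin p j)
    (hmin : ∀ k, D.IsJoin p k → hammingNorm j ≤ hammingNorm k) : D.IsForest j := by
  intro x hx h
  have hmate : Set.MapsTo D.mate {y | j y = 1} {y | j y = 1} := fun y hy => (hj.mate y).trans hy
  obtain ⟨z, hz, hzb, hzx⟩ := exists_cycle_of_linked hmate h
  refine (hmin _ (hj.add_cycle hz hzb)).not_gt ?_
  simp only [hammingNorm_eq_card_eq_one]
  refine Finset.card_lt_card (Finset.ssubset_iff_subset_ne.2 ⟨fun y hy => ?_, fun h => ?_⟩)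
  · rw [Finset.mem_filter_univ] at hy ⊢
    by_contra hjy
    have hzy : z y = 0 := by
      refine hz.2 y ?_
      rintro (hy' | rfl | rfl)
      exacts [hjy hy', hjy hx, hjy (hmate hx)]
    exact hjy (by simpa [hzy] using hy)
  · have := h.symm ▸ (Finset.mem_filter_univ x).2 hx
    rw [Finset.mem_filter_univ, Pi.add_apply, hx, hzx] at this
    exact absurd this (by decide)

theorem exists_isJoin_isForest [Fintype C] {p : C → ZMod 2} (hp : ∑ c, p c = 0)
    (hconn : ∀ c d, D.Linked Set.univ c d)
    (hbridge : ∀ x, D.Linked {x, D.mate x}ᶜ (D.base x) (D.base (D.mate x))) :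
    ∃ j, D.IsJoin p j ∧ D.IsForest j ∧ 2 * hammingNorm j ≤ Fintype.card V := by
  obtain ⟨k, hk, hkp⟩ := mem_map_boundary_of_forall_linked hconn hp
  have hne : ({j | D.IsJoin p j} : Finset (V → ZMod 2)).Nonempty :=
    ⟨k, (Finset.mem_filter_univ _).2 ⟨hk.1, hkp⟩⟩
  obtain ⟨l, hl, hlV⟩ := exists_two_mul_hammingNorm_le_card hne fun x => by
    obtain ⟨z, hz, hzb, hzx⟩ := exists_cycle_of_linked (Set.mapsTo_univ _ _)
      (Set.compl_eq_univ_sdiff _ ▸ hbridge x)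
    refine ⟨z, hzx, fun j hj => ?_⟩
    rw [Finset.mem_filter_univ] at hj ⊢
    exact hj.add_cycle hz hzb
  obtain ⟨j, hj, hmin⟩ := Finset.exists_min_image _ hammingNorm hne
  simp only [Finset.mem_filter_univ] at hj hl hmin
  exact ⟨j, hj, hj.isForest_of_forall_le hmin, (Nat.mul_le_mul_left 2 (hmin l hl)).trans hlV⟩

variable (D) in
/-- The degree of the vertex `c` in the edge set `j`. -/
noncomputable def degree (j : V → ZMod 2) (c : C) : ℕ := #{x | D.base x = c ∧ j x = 1}

lemma boundary_eq_degree (j : V → ZMod 2) (c : C) : D.boundary j c = D.degree j c := by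
  have h : ∀ a : ZMod 2, a = if a = 1 then 1 else 0 := by decide
  rw [boundary_apply, degree, ← Finset.filter_filter, Finset.card_filter, Nat.cast_sum]
  exact Finset.sum_congr rfl fun x _ => by rw [Nat.cast_ite, Nat.cast_one, Nat.cast_zero, ← h]

lemma degree_pos {j : V → ZMod 2} {x : V} (hx : j x = 1) : 0 < D.degree j (D.base x) :=
  Finset.card_pos.2 ⟨x, (Finset.mem_filter_univ x).2 ⟨rfl, hx⟩⟩

lemma eq_of_degree_le_one {j : V → ZMod 2} {c : C} (hc : D.degree j c ≤ 1) {x y : V}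
    (hx : D.base x = c) (hy : D.base y = c) (hjx : j x = 1) (hjy : j y = 1) : x = y :=
  Finset.card_le_one.1 hc x ((Finset.mem_filter_univ x).2 ⟨hx, hjx⟩)
    y ((Finset.mem_filter_univ y).2 ⟨hy, hjy⟩)

lemma exists_boundary_eq_injOn (j : V → ZMod 2) :
    ∃ t : V → ZMod 2, D.boundary t = D.boundary j ∧ Set.InjOn D.base {x | t x = 1} ∧
      ∀ x, D.degree j (D.base x) ≤ 1 → t x = j x := by
  have h : ∀ c, ∃ s : V → ZMod 2, D.boundary s c = D.boundary j c ∧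
      (∀ x y, D.base x = c → D.base y = c → s x = 1 → s y = 1 → x = y) ∧
      (D.degree j c ≤ 1 → s = j) := by
    intro c
    by_cases hc : D.degree j c ≤ 1
    · exact ⟨j, rfl, fun x y => eq_of_degree_le_one hc, fun _ => rfl⟩
    obtain ⟨r, hr⟩ := Finset.card_pos.1 (by omega : 0 < D.degree j c)
    obtain ⟨rfl, -⟩ := (Finset.mem_filter_univ r).1 hr
    refine ⟨Pi.single r (D.boundary j (D.base r)), ?_, fun x y _ _ hx hy => ?_,
      fun h => absurd h hc⟩
    · simp [boundary_apply, Pi.single_apply]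
    · have heq : ∀ z, (Pi.single r (D.boundary j (D.base r)) : V → ZMod 2) z = 1 → z = r :=
        fun z hz => by_contra fun hzr => zero_ne_one (α := ZMod 2) (by
          rw [← hz, Pi.single_eq_of_ne hzr])
      rw [heq x hx, heq y hy]
  choose s hs hsinj hsj using h
  refine ⟨fun x => s (D.base x) x, ?_, fun x hx y hy hxy => ?_, fun x hx => congrFun (hsj _ hx) x⟩
  · ext c
    rw [← hs c]
    exact Finset.sum_congr rfl fun x hx =>
      congrArg (s · x) ((Finset.mem_filter_univ x).1 hx)
  · exact hsinj (D.base x) x y rfl hxy.symm hx (by rw [hxy]; exact hy)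

lemma bijOn_base {t : V → ZMod 2} (ht : Set.InjOn D.base {x | t x = 1}) :
    Set.BijOn D.base {x | t x = 1} {c | D.boundary t c = 1} := by
  refine ⟨fun x hx => ?_, ht, fun c hc => ?_⟩
  · have hdeg : D.degree t (D.base x) = 1 :=
      Finset.card_eq_one.2 ⟨x, Finset.eq_singleton_iff_unique_mem.2
        ⟨(Finset.mem_filter_univ x).2 ⟨rfl, hx⟩, fun y hy =>
          have hy := (Finset.mem_filter_univ y).1 hy
          ht hy.2 hx hy.1⟩⟩
    rw [Set.mem_ofPred_eq, boundary_eq_degree, hdeg, Nat.cast_one]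
  · have hdeg : D.degree t c ≠ 0 := fun h => by
      rw [Set.mem_ofPred_eq, boundary_eq_degree, h] at hc
      exact zero_ne_one hc
    obtain ⟨x, hx⟩ := Finset.card_ne_zero.1 hdeg
    exact ⟨x, ((Finset.mem_filter_univ x).1 hx).symm⟩

end Boundary

end DartGraph

/-- A multigraph with a cyclic order of the darts around each vertex: the darts starting at a vertex
form a single orbit of `succ`. -/
structure RotationSystem (V C : Type*) extends DartGraph V C where
  succ : Equiv.Perm V
  base_eq_iff : ∀ {x y}, base x = base y ↔ succ.SameCycle x y
  base_surjective : Function.Surjective base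

namespace RotationSystem

open scoped Classical Finset

variable {C : Type*} (D : RotationSystem V C)

@[simp] lemma base_succ (x : V) : D.base (D.succ x) = D.base x :=
  D.base_eq_iff.2 (Equiv.Perm.SameCycle.refl _ _).apply_left

@[simp] lemma base_succ_symm (x : V) : D.base (D.succ.symm x) = D.base x := by
  rw [← D.base_succ, Equiv.apply_symm_apply]

lemma base_iterate_succ (k : ℕ) (x : V) : D.base (D.succ^[k] x) = D.base x := by
  induction k with
  | zero => rfl
  | succ k ih => rw [Function.iterate_succ_apply', base_succ, ih]

lemma exists_iterate_succ_eq [Finite V] {x y : V} (h : D.base x = D.base y) :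
    ∃ k : ℕ, D.succ^[k] x = y := by
  obtain ⟨k, -, hk⟩ := (D.base_eq_iff.1 h).exists_pow_eq'
  exact ⟨k, by rw [Equiv.Perm.iterate_eq_pow, hk]⟩

lemma exists_add_comp_succ_symm_eq [Fintype V] {q : V → ZMod 2} (hq : D.boundary q = 0)
    {P : C → Prop} [DecidablePred P] (hqP : ∀ x, ¬ P (D.base x) → q x = 0) :
    ∃ ξ : V → ZMod 2, (∀ x, ξ x + ξ (D.succ.symm x) = q x) ∧
      2 * hammingNorm ξ ≤ #{x | P (D.base x)} := by
  obtain ⟨ξ, hξ⟩ := exists_sub_comp_symm_eq D.succ (q := q) fun y => by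
    refine Eq.trans ?_ (congrFun hq (D.base y))
    rw [D.boundary_apply]
    congr! 2 with x
    exact D.base_eq_iff.symm
  have hξ' : ∀ x, ξ x + ξ (D.succ.symm x) = q x := fun x => by rw [← hξ, CharTwo.sub_eq_add]
  let η (a : ZMod 2) (x : V) : ZMod 2 := if P (D.base x) then ξ x + a else 0
  have hη : ∀ a x, η a x + η a (D.succ.symm x) = q x := by
    intro a x
    simp only [η, base_succ_symm]
    split_ifs with hx
    · rw [add_add_add_comm, CharTwo.add_self_eq_zero, add_zero, hξ']
    · rw [add_zero, hqP x hx]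
  have hsum : hammingNorm (η 0) + hammingNorm (η 1) = #{x | P (D.base x)} := by
    have hz : ∀ a : ZMod 2, a + 1 = 1 ↔ ¬ a = 1 := by decide
    have hη1 : ∀ a x, η a x = 1 ↔ P (D.base x) ∧ ξ x + a = 1 := by
      intro a x
      simp only [η]
      split_ifs with hx <;> simp [hx]
    simp only [hammingNorm_eq_card_eq_one, hη1, hz, add_zero, ← Finset.filter_filter]
    exact Finset.card_filter_add_card_filter_not _
  rcases le_total (hammingNorm (η 0)) (hammingNorm (η 1)) with h | h
  · exact ⟨η 0, hη 0, by omega⟩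
  · exact ⟨η 1, hη 1, by omega⟩

/-- One step along the boundary of the thickened subgraph with edge set `j`: turn to the next dart,
and cross its edge if this edge belongs to `j`. -/
noncomputable def face (j : V → ZMod 2) (x : V) : V :=
  if j (D.succ x) = 1 then D.mate (D.succ x) else D.succ x

section Face

variable {D} {j : V → ZMod 2}

lemma face_of_eq_one {x : V} (h : j (D.succ x) = 1) : D.face j x = D.mate (D.succ x) := if_pos h

lemma face_of_ne_one {x : V} (h : j (D.succ x) ≠ 1) : D.face j x = D.succ x := if_neg h

lemma face_injective (hj : ∀ x, j (D.mate x) = j x) : Function.Injective (D.face j) := by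
  intro x y h
  by_cases hx : j (D.succ x) = 1 <;> by_cases hy : j (D.succ y) = 1
  · rw [face_of_eq_one hx, face_of_eq_one hy] at h
    exact D.succ.injective (D.mate_injective h)
  · rw [face_of_eq_one hx, face_of_ne_one hy] at h
    exact absurd (by rw [← h, hj, hx]) hy
  · rw [face_of_ne_one hx, face_of_eq_one hy] at h
    exact absurd (by rw [h, hj, hy]) hx
  · rw [face_of_ne_one hx, face_of_ne_one hy] at h
    exact D.succ.injective h

lemma face_succ_symm {a : V} (ha : j a = 1) : D.face j (D.succ.symm a) = D.mate a := by
  rw [face_of_eq_one (by rwa [Equiv.apply_symm_apply]), Equiv.apply_symm_apply]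

lemma iterate_face_of_forall_ne_one {x : V} {n : ℕ}
    (h : ∀ k < n, j (D.succ ((D.face j)^[k] x)) ≠ 1) : (D.face j)^[n] x = D.succ^[n] x := by
  induction n with
  | zero => rfl
  | succ n ih =>
    rw [Function.iterate_succ_apply', face_of_ne_one (h n n.lt_succ_self),
      ih fun k hk => h k (hk.trans n.lt_succ_self), Function.iterate_succ_apply']

lemma degree_iterate_face_pos [Fintype V] (hj : ∀ x, j (D.mate x) = j x) {x : V}
    (hx : 0 < D.degree j (D.base x)) (n : ℕ) : 0 < D.degree j (D.base ((D.face j)^[n] x)) := by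
  induction n with
  | zero => exact hx
  | succ n ih =>
    rw [Function.iterate_succ_apply']
    by_cases hc : j (D.succ ((D.face j)^[n] x)) = 1
    · rw [face_of_eq_one hc]
      exact DartGraph.degree_pos ((hj _).trans hc)
    · rwa [face_of_ne_one hc, base_succ]

lemma degree_eq_one_of_succ_iterate_face_eq [Fintype V] {x : V} {n : ℕ} (hx : j x = 1)
    (h : ∀ k < n, j (D.succ ((D.face j)^[k] x)) ≠ 1) (hn : D.succ ((D.face j)^[n] x) = x) :
    D.degree j (D.base x) = 1 := by
  have hface : ∀ k ≤ n, (D.face j)^[k] x = D.succ^[k] x := fun k hk =>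
    iterate_face_of_forall_ne_one fun i hi => h i (by omega)
  have hper : Function.IsPeriodicPt D.succ (n + 1) x := by
    rw [Function.IsPeriodicPt, Function.IsFixedPt, Function.iterate_succ_apply', ← hface n le_rfl,
      hn]
  refine Finset.card_eq_one.2 ⟨x, Finset.eq_singleton_iff_unique_mem.2
    ⟨(Finset.mem_filter_univ x).2 ⟨rfl, hx⟩, fun y hy => ?_⟩⟩
  obtain ⟨hyx, hjy⟩ := (Finset.mem_filter_univ y).1 hy
  obtain ⟨m, rfl⟩ := D.exists_iterate_succ_eq hyx.symm
  have hlt := Nat.mod_lt m n.succ_pos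
  rw [← hper.iterate_mod_apply] at hjy ⊢
  generalize m % (n + 1) = t at hlt hjy
  cases t with
  | zero => rfl
  | succ t =>
    rw [Function.iterate_succ_apply', ← hface t (by omega)] at hjy
    exact absurd hjy (h t (by omega))

lemma exists_succ_iterate_face_eq_self (hf : D.IsForest j) {b : V} (hb : j b = 1) {n : ℕ}
    (hn : D.base ((D.face j)^[n] b) = D.base (D.mate b)) :
    ∃ p < n, D.succ ((D.face j)^[p] b) = b := by
  by_contra! hne
  have hlink : ∀ p ≤ n, D.Linked ({y | j y = 1} \ {b, D.mate b}) (D.base b)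
      (D.base ((D.face j)^[p] b)) := by
    intro p
    induction p with
    | zero => exact fun _ => .refl
    | succ p ih =>
      intro hp
      have h := ih (by omega)
      rw [Function.iterate_succ_apply']
      by_cases hc : j (D.succ ((D.face j)^[p] b)) = 1
      · rw [face_of_eq_one hc]
        refine h.tail ⟨_, ⟨hc, ?_⟩, D.base_succ _, rfl⟩
        rintro (heq | (heq : _ = D.mate b))
        · exact hne p (by omega) heq
        · exact hf b hb ((D.base_succ _).symm.trans (congrArg D.base heq) ▸ h)
      · rwa [face_of_ne_one hc, base_succ]
  exact hf b hb (hn ▸ hlink n le_rfl)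

/-- A first crossing would have to be undone at the same edge, hence after turning around at a
leaf. -/
lemma ne_one_of_base_iterate_face_eq [Fintype V] (hj : ∀ x, j (D.mate x) = j x)
    (hf : D.IsForest j) {n : ℕ} {x : V}
    (hleaf : ∀ k < n, D.degree j (D.base ((D.face j)^[k] x)) ≠ 1)
    (hn : D.base ((D.face j)^[n] x) = D.base x) :
    ∀ k < n, j (D.succ ((D.face j)^[k] x)) ≠ 1 := by
  induction n using Nat.strong_induction_on generalizing x with
  | _ n ih =>
  by_contra! hex
  obtain ⟨hkn, hk⟩ := Nat.find_spec hex
  have hmin : ∀ i < Nat.find hex, j (D.succ ((D.face j)^[i] x)) ≠ 1 := fun i hi h =>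
    Nat.find_min hex hi ⟨hi.trans hkn, h⟩
  generalize Nat.find hex = k at hkn hk hmin
  set b := D.mate (D.succ ((D.face j)^[k] x)) with hb
  have hit : ∀ i, (D.face j)^[i] b = (D.face j)^[i + (k + 1)] x := fun i => by
    rw [hb, ← face_of_eq_one hk, ← Function.iterate_succ_apply' (D.face j),
      ← Function.iterate_add_apply]
  have hjb : j b = 1 := (hj _).trans hk
  obtain ⟨p, hp, hpb⟩ := exists_succ_iterate_face_eq_self hf hjb (n := n - (k + 1)) (by
    rw [hit, Nat.sub_add_cancel hkn, hn, hb, D.mate_mate, base_succ,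
      iterate_face_of_forall_ne_one hmin, base_iterate_succ])
  have hleaf' : ∀ i ≤ p, D.degree j (D.base ((D.face j)^[i] b)) ≠ 1 := fun i hi => by
    rw [hit]
    exact hleaf _ (by omega)
  refine hleaf' 0 p.zero_le (degree_eq_one_of_succ_iterate_face_eq hjb
    (ih p (by omega) (fun i hi => hleaf' i hi.le) ?_) hpb)
  exact (D.base_succ _).symm.trans (congrArg D.base hpb)

end Face

variable [Fintype V]

/-- The face through `x` first reaches a leaf, that is, a vertex of degree one in `j`, after `n`
steps. -/
def FirstLeaf (j : V → ZMod 2) (n : ℕ) (x : V) : Prop :=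
  (∀ k < n, D.degree j (D.base ((D.face j)^[k] x)) ≠ 1) ∧
    D.degree j (D.base ((D.face j)^[n] x)) = 1

/-- The darts of the edge set `j` that start at its leaves. -/
noncomputable def leafDarts (j : V → ZMod 2) : Finset V := {x | j x = 1 ∧ D.degree j (D.base x) = 1}

section FirstLeaf

variable {D} {j : V → ZMod 2}

lemma mem_leafDarts {a : V} : a ∈ D.leafDarts j ↔ j a = 1 ∧ D.degree j (D.base a) = 1 :=
  Finset.mem_filter_univ a

lemma injOn_base_leafDarts : Set.InjOn D.base (D.leafDarts j) := fun _ ha _ hb hab =>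
  DartGraph.eq_of_degree_le_one (mem_leafDarts.1 ha).2.le rfl hab.symm (mem_leafDarts.1 ha).1
    (mem_leafDarts.1 hb).1

lemma exists_mem_leafDarts {x : V} (hx : D.degree j (D.base x) = 1) :
    ∃ a ∈ D.leafDarts j, D.base a = D.base x := by
  obtain ⟨a, ha⟩ := Finset.card_pos.1 (hx ▸ one_pos : 0 < D.degree j (D.base x))
  obtain ⟨hax, hja⟩ := (Finset.mem_filter_univ a).1 ha
  exact ⟨a, mem_leafDarts.2 ⟨hja, hax ▸ hx⟩, hax⟩

namespace FirstLeaf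

lemma face {n : ℕ} {x : V} (h : D.FirstLeaf j (n + 1) x) : D.FirstLeaf j n (D.face j x) :=
  ⟨fun k hk => h.1 (k + 1) (by omega), h.2⟩

lemma iterate_ne {n : ℕ} {x : V} (h : D.FirstLeaf j n x) {i : ℕ} (hi : 0 < i)
    (hin : i ≤ n) : (D.face j)^[i] x ≠ x := by
  intro hx
  have hn := h.2
  rw [show n = (n - i) + i by omega, Function.iterate_add_apply, hx] at hn
  exact h.1 _ (by omega) hn

lemma succ_iterate_ne (hj : ∀ x, j (D.mate x) = j x) (hf : D.IsForest j) {n : ℕ} {x : V}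
    (h : D.FirstLeaf j n x) {k : ℕ} (hk : k < n) (hc : j (D.succ ((D.face j)^[k] x)) = 1) :
    D.succ ((D.face j)^[k] x) ≠ x := by
  intro hx
  refine h.1 0 (by omega) (degree_eq_one_of_succ_iterate_face_eq (hx ▸ hc)
    (ne_one_of_base_iterate_face_eq hj hf (fun i hi => h.1 i (by omega)) ?_) hx)
  exact (D.base_succ _).symm.trans (congrArg D.base hx)

lemma iterate_ne_succ (hj : ∀ x, j (D.mate x) = j x) (hf : D.IsForest j) {n : ℕ} {x : V}
    (h : D.FirstLeaf j n x) {i : ℕ} (hi : 0 < i) (hin : i ≤ n) (hc : j (D.succ x) = 1) :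
    (D.face j)^[i] x ≠ D.succ x := fun hx =>
  ne_one_of_base_iterate_face_eq hj hf (fun k hk => h.1 k (by omega)) (by rw [hx, D.base_succ])
    0 hi hc

lemma base_ne (hj : ∀ x, j (D.mate x) = j x) (hf : D.IsForest j) {a : V} (ha : j a = 1) {n : ℕ}
    (h : D.FirstLeaf j n (D.mate a)) : D.base ((D.face j)^[n] (D.mate a)) ≠ D.base a := by
  intro hbase
  have hb : j (D.mate a) = 1 := (hj a).trans ha
  obtain ⟨p, hp, hpa⟩ := exists_succ_iterate_face_eq_self hf hb (by rwa [D.mate_mate])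
  exact h.succ_iterate_ne hj hf hp (by rwa [hpa]) hpa

lemma iterate_mem_leafDarts (hj : ∀ x, j (D.mate x) = j x) {a : V} (ha : j a = 1) {n : ℕ}
    (hn : D.FirstLeaf j n (D.mate a)) : (D.face j)^[n] (D.mate a) ∈ D.leafDarts j := by
  refine mem_leafDarts.2 ⟨?_, hn.2⟩
  cases n with
  | zero => exact (hj a).trans ha
  | succ n =>
    have hlast := hn.2
    rw [Function.iterate_succ_apply'] at hlast ⊢
    by_cases hc : j (D.succ ((D.face j)^[n] (D.mate a))) = 1
    · rw [face_of_eq_one hc, hj, hc]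
    · rw [face_of_ne_one hc, D.base_succ] at hlast
      exact absurd hlast (hn.1 n n.lt_succ_self)

lemma eq_of_iterate_eq (hj : ∀ x, j (D.mate x) = j x) {a b : V} (ha : a ∈ D.leafDarts j)
    (hb : b ∈ D.leafDarts j) {n m : ℕ} (hn : D.FirstLeaf j n (D.mate a))
    (hm : D.FirstLeaf j m (D.mate b)) {i k : ℕ} (hi : i ≤ n) (hk : k ≤ m)
    (h : (D.face j)^[i] (D.mate a) = (D.face j)^[k] (D.mate b)) : a = b ∧ i = k := by
  wlog hik : i ≤ k generalizing a b n m i k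
  · have := this hb ha hm hn hk hi h.symm (by omega)
    exact ⟨this.1.symm, this.2.symm⟩
  obtain ⟨d, rfl⟩ := Nat.exists_eq_add_of_le hik
  rw [Function.iterate_add_apply] at h
  have hd := (face_injective hj).iterate i h
  cases d with
  | zero => exact ⟨D.mate_injective hd, rfl⟩
  | succ d =>
    rw [← face_succ_symm (mem_leafDarts.1 ha).1, Function.iterate_succ_apply'] at hd
    refine absurd ?_ (hm.1 d (by omega))
    rw [← face_injective hj hd, base_succ_symm]
    exact (mem_leafDarts.1 ha).2

end FirstLeaf

lemma exists_firstLeaf (hj : ∀ x, j (D.mate x) = j x) {a : V} (ha : a ∈ D.leafDarts j) :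
    ∃ n, D.FirstLeaf j n (D.mate a) := by
  obtain ⟨ha, hleaf⟩ := mem_leafDarts.1 ha
  have hex : ∃ n, D.degree j (D.base ((D.face j)^[n] (D.mate a))) = 1 := by
    obtain ⟨m, hm, hper⟩ := (face_injective hj).mem_periodicPts (D.mate a)
    refine ⟨m - 1, ?_⟩
    have : (D.face j)^[m - 1] (D.mate a) = D.succ.symm a := by
      apply face_injective hj
      rw [← Function.iterate_succ_apply' (f := D.face j), Nat.succ_eq_add_one,
        Nat.sub_add_cancel hm, face_succ_symm ha]
      exact hper
    rwa [this, base_succ_symm]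
  exact ⟨Nat.find hex, fun k hk => Nat.find_min hex hk, Nat.find_spec hex⟩

lemma exists_iterate_face_eq_of_two_le_degree (hj : ∀ x, j (D.mate x) = j x) (hf : D.IsForest j)
    {x : V} (hx : 2 ≤ D.degree j (D.base x)) :
    ∃ k y, (D.face j)^[k + 1] y = x ∧ D.degree j (D.base y) = 1 := by
  by_contra! hno
  obtain ⟨m, hm, hper⟩ := (face_injective hj).mem_periodicPts x
  have hper' : ∀ q, (D.face j)^[m * q] x = x := fun q => hper.mul_const q
  have hleaf : ∀ i, D.degree j (D.base ((D.face j)^[i] x)) ≠ 1 := by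
    intro i
    have hle : i + 1 ≤ m * (i + 1) := Nat.le_mul_of_pos_left _ hm
    refine hno (m * (i + 1) - i - 1) _ ?_
    rw [← Function.iterate_add_apply, show m * (i + 1) - i - 1 + 1 + i = m * (i + 1) by omega,
      hper']
  have hc : ∀ k, j (D.succ ((D.face j)^[k] x)) ≠ 1 := fun k =>
    ne_one_of_base_iterate_face_eq hj hf (n := m * (k + 1)) (fun i _ => hleaf i) (by rw [hper']) k
      (Nat.le_mul_of_pos_left _ hm)
  have hpos : 0 < D.degree j (D.base x) := by omega
  obtain ⟨y, hy⟩ := Finset.card_pos.1 hpos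
  obtain ⟨hyx, hjy⟩ := (Finset.mem_filter_univ y).1 hy
  obtain ⟨k, hk⟩ := D.exists_iterate_succ_eq (hyx.symm.trans (D.base_succ_symm y).symm)
  have h := hc k
  rw [iterate_face_of_forall_ne_one fun i _ => hc i, hk, Equiv.apply_symm_apply] at h
  exact h hjy

lemma exists_mem_leafDarts_iterate_face_eq (hj : ∀ x, j (D.mate x) = j x) (hf : D.IsForest j)
    {x : V} (hx : 2 ≤ D.degree j (D.base x)) :
    ∃ a ∈ D.leafDarts j, ∃ i, (D.face j)^[i] (D.mate a) = x ∧
      ∀ k ≤ i, D.degree j (D.base ((D.face j)^[k] (D.mate a))) ≠ 1 := by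
  have hex := exists_iterate_face_eq_of_two_le_degree hj hf hx
  obtain ⟨y, hy, hleaf⟩ := Nat.find_spec hex
  have hmin : ∀ i < Nat.find hex, ∀ z, (D.face j)^[i + 1] z = x → D.degree j (D.base z) ≠ 1 :=
    fun i hi z hz hE => Nat.find_min hex hi ⟨z, hz, hE⟩
  generalize Nat.find hex = k at hy hmin
  have hne : ∀ i ≤ k, D.degree j (D.base ((D.face j)^[i] (D.face j y))) ≠ 1 := by
    intro i hi
    rw [← Function.iterate_succ_apply]
    rcases hi.eq_or_lt with rfl | hi
    · rw [hy]
      omega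
    · refine hmin (k - i - 1) (by omega) _ ?_
      rw [← Function.iterate_add_apply, show k - i - 1 + 1 + (i + 1) = k + 1 by omega, hy]
  have hc : j (D.succ y) = 1 := by
    by_contra hc
    refine hne 0 k.zero_le ?_
    rwa [Function.iterate_zero_apply, face_of_ne_one hc, D.base_succ]
  rw [face_of_eq_one hc] at hne
  refine ⟨D.succ y, mem_leafDarts.2 ⟨hc, by rwa [base_succ]⟩, k, ?_, hne⟩
  rw [← face_of_eq_one hc, ← Function.iterate_succ_apply, hy]

variable (D) in
/-- The number of edges on the first `n` steps of the face through `x`, where a step that crosses an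
edge of `j` traverses two edges. -/
noncomputable def arcLength (j : V → ZMod 2) (n : ℕ) (x : V) : ℕ :=
  ∑ i ∈ Finset.range n, (1 + if j (D.succ ((D.face j)^[i] x)) = 1 then 1 else 0)

omit [Fintype V] in
variable (D j) in
lemma arcLength_succ (n : ℕ) (x : V) :
    D.arcLength j (n + 1) x =
      1 + (if j (D.succ x) = 1 then 1 else 0) + D.arcLength j n (D.face j x) := by
  rw [arcLength, Finset.sum_range_succ', add_comm]
  rfl

lemma sum_arcLength_le (hj : ∀ x, j (D.mate x) = j x) {n : V → ℕ}
    (hn : ∀ a ∈ D.leafDarts j, D.FirstLeaf j (n a) (D.mate a)) :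
    ∑ a ∈ D.leafDarts j, D.arcLength j (n a) (D.mate a) ≤
      ∑ x with 2 ≤ D.degree j (D.base x), (1 + if j (D.succ x) = 1 then 1 else 0) := by
  simp only [arcLength]
  rw [Finset.sum_sigma', ← Finset.sum_image
    (g := fun p : Σ _ : V, ℕ => (D.face j)^[p.2] (D.mate p.1))
    (f := fun x => 1 + if j (D.succ x) = 1 then 1 else 0)]
  · refine Finset.sum_le_sum_of_subset fun x hx => ?_
    obtain ⟨⟨a, i⟩, hai, rfl⟩ := Finset.mem_image.1 hx
    obtain ⟨ha, hi⟩ := Finset.mem_sigma.1 hai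
    have hpos := degree_iterate_face_pos hj
      (DartGraph.degree_pos ((hj a).trans (mem_leafDarts.1 ha).1)) i
    have hne := (hn a ha).1 i (Finset.mem_range.1 hi)
    exact (Finset.mem_filter_univ _).2 (Nat.lt_of_le_of_ne hpos hne.symm)
  · rintro ⟨a, i⟩ hai ⟨b, k⟩ hbk h
    simp only [Finset.coe_sigma, Set.mem_sigma_iff, Finset.mem_coe, Finset.mem_range] at hai hbk
    obtain ⟨rfl, rfl⟩ := FirstLeaf.eq_of_iterate_eq hj hai.1 hbk.1 (hn a hai.1) (hn b hbk.1)
      hai.2.le hbk.2.le h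
    rfl

variable (D j) in
lemma card_leafDarts_add_card_le :
    #(D.leafDarts j) + #{x | 2 ≤ D.degree j (D.base x) ∧ j (D.succ x) = 1} ≤ hammingNorm j := by
  have hinner : #{x | 2 ≤ D.degree j (D.base x) ∧ j (D.succ x) = 1} ≤
      #{x | 2 ≤ D.degree j (D.base x) ∧ j x = 1} :=
    Finset.card_le_card_of_injOn D.succ (by intro x; simp) D.succ.injective.injOn
  refine (Nat.add_le_add_left hinner _).trans ?_
  rw [hammingNorm_eq_card_eq_one, ← Finset.card_union_of_disjoint]
  · refine Finset.card_le_card fun x hx => ?_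
    simp only [Finset.mem_union, mem_leafDarts, Finset.mem_filter_univ] at hx ⊢
    exact hx.elim And.left And.right
  · refine Finset.disjoint_left.2 fun x hx hx' => ?_
    have hleaf := (mem_leafDarts.1 hx).2
    have hinner := ((Finset.mem_filter_univ x).1 hx').1
    omega

lemma sum_one_add_arcLength_le (hj : ∀ x, j (D.mate x) = j x) {n : V → ℕ}
    (hn : ∀ a ∈ D.leafDarts j, D.FirstLeaf j (n a) (D.mate a)) :
    ∑ a ∈ D.leafDarts j, (1 + D.arcLength j (n a) (D.mate a)) ≤
      hammingNorm j + #{x | 2 ≤ D.degree j (D.base x)} := by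
  have harcs := sum_arcLength_le hj hn
  have hcross := card_leafDarts_add_card_le D j
  simp only [Finset.sum_add_distrib, Finset.sum_const, smul_eq_mul, mul_one, Finset.sum_boole,
    Finset.filter_filter, Nat.cast_id] at harcs ⊢
  omega

end FirstLeaf

end RotationSystem

/-- A cubic graph `G` with an oriented `2`-factor and the complementary perfect matching.
Contracting the circuits of the `2`-factor turns the matching into a multigraph on `C` whose darts
are the vertices of `G`, with rotation given by the successor on the circuit. -/
structure OrientedTwoFactor (G : SimpleGraph V) (C : Type*) extends RotationSystem V C where
  succ_succ_ne : ∀ x, succ (succ x) ≠ x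
  mate_ne_succ : ∀ x, mate x ≠ succ x
  adj_iff : ∀ {x y}, G.Adj x y ↔ y = succ x ∨ x = succ y ∨ y = mate x

section TwoFactor

variable {G : SimpleGraph V} {F : G.Subgraph}

lemma exists_perm_adj_iff_of_isTwoFactor [Finite V] (hF : IsTwoFactor G F) :
    ∃ π : Equiv.Perm V, (∀ x y, F.Adj x y ↔ y = π x ∨ x = π y) ∧ ∀ x, π (π x) ≠ x := by
  obtain ⟨π, hπ, hππ⟩ := exists_perm_adj_of_ncard_neighborSet_eq_two (H := F.spanningCoe) hF.2
  simp only [Subgraph.spanningCoe_adj] at hπ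
  have hnbr : ∀ x, {π x, π.symm x} = F.neighborSet x := by
    refine fun x => Set.eq_of_subset_of_ncard_le ?_ ?_ (Set.toFinite _)
    · rintro y (rfl | rfl)
      · exact hπ x
      · have h := (hπ (π.symm x)).symm
        rwa [π.apply_symm_apply] at h
    · rw [hF.2, Set.ncard_pair fun h => hππ x (by rw [h, π.apply_symm_apply])]
  refine ⟨π, fun x y => ?_, hππ⟩
  rw [← Subgraph.mem_neighborSet, ← hnbr, Set.mem_insert_iff, Set.mem_singleton_iff,
    Equiv.eq_symm_apply, eq_comm (a := π y)]

lemma exists_eq_iff_adj_and_not_adj (hcubic : IsCubic G) (hF : IsTwoFactor G F) :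
    ∃ m : V → V, ∀ x y, y = m x ↔ G.Adj x y ∧ ¬ F.Adj x y := by
  have hm : ∀ x, ∃ y, G.neighborSet x \ F.neighborSet x = {y} := fun x => by
    rw [← Set.ncard_eq_one, Set.ncard_sdiff (F.neighborSet_subset x)
      (Set.finite_of_ncard_ne_zero (by rw [hF.2]; decide)), hcubic, hF.2]
  choose m hm using hm
  refine ⟨m, fun x y => ?_⟩
  rw [← Set.mem_singleton_iff, ← hm]
  rfl

theorem exists_orientedTwoFactor [Finite V] (hcubic : IsCubic G) (hF : IsTwoFactor G F) :
    ∃ (s : Setoid V) (D : OrientedTwoFactor G (Quotient s)),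
      ∀ x y, F.Adj x y ↔ y = D.succ x ∨ x = D.succ y := by
  obtain ⟨π, hπ, hππ⟩ := exists_perm_adj_iff_of_isTwoFactor hF
  obtain ⟨m, hm⟩ := exists_eq_iff_adj_and_not_adj hcubic hF
  have hmate : ∀ x, G.Adj x (m x) ∧ ¬ F.Adj x (m x) := fun x => (hm x _).1 rfl
  exact ⟨Equiv.Perm.SameCycle.setoid π,
    { mate := m
      base := Quotient.mk _
      mate_mate := fun x => ((hm _ _).2 ⟨(hmate x).1.symm, fun h => (hmate x).2 h.symm⟩).symm
      mate_ne := fun x => (hmate x).1.ne'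
      succ := π
      base_eq_iff := Quotient.eq
      base_surjective := Quotient.mk_surjective
      succ_succ_ne := hππ
      mate_ne_succ := fun x h => (hmate x).2 ((hπ x _).2 (.inl h))
      adj_iff := fun {x y} => by
        have := fun h : F.Adj x y => h.adj_sub
        rw [← or_assoc, ← hπ, hm]
        tauto }, hπ⟩

end TwoFactor

lemma DartGraph.linked_of_reachable {C : Type*} {D : DartGraph V C} {K : SimpleGraph V} {A : Set V}
    (hK : ∀ x y, K.Adj x y → D.base x = D.base y ∨ x ∈ A ∧ y = D.mate x) {x y : V}
    (h : K.Reachable x y) : D.Linked A (D.base x) (D.base y) := by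
  obtain ⟨w⟩ := h
  induction w with
  | nil => exact .refl
  | cons h _ ih =>
    rcases hK _ _ h with h | ⟨hx, rfl⟩
    · rwa [h]
    · exact ih.head ⟨_, hx, rfl, rfl⟩

namespace OrientedTwoFactor

open scoped Classical Finset

variable {G : SimpleGraph V} {C : Type*} (D : OrientedTwoFactor G C)

lemma adj_succ (x : V) : G.Adj x (D.succ x) := D.adj_iff.2 (.inl rfl)

lemma adj_mate (x : V) : G.Adj x (D.mate x) := D.adj_iff.2 (.inr (.inr rfl))

lemma base_eq_or_eq_mate {x y : V} (h : G.Adj x y) : D.base x = D.base y ∨ y = D.mate x := by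
  rcases D.adj_iff.1 h with rfl | rfl | rfl
  · exact .inl (D.base_succ x).symm
  · exact .inl (D.base_succ y)
  · exact .inr rfl

lemma linked_univ (hG : G.Connected) (c d : C) : D.Linked Set.univ c d := by
  obtain ⟨x, rfl⟩ := D.base_surjective c
  obtain ⟨y, rfl⟩ := D.base_surjective d
  exact DartGraph.linked_of_reachable
    (fun x y h => (D.base_eq_or_eq_mate h).imp_right fun h => ⟨trivial, h⟩) (hG.preconnected x y)

lemma linked_compl_pair (hG : ∀ e, ¬ G.IsBridge e) (x : V) :
    D.Linked {x, D.mate x}ᶜ (D.base x) (D.base (D.mate x)) := by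
  have h := hG s(x, D.mate x)
  rw [isBridge_iff, not_not] at h
  refine DartGraph.linked_of_reachable (fun y z hyz => ?_) h
  rw [deleteEdges_adj] at hyz
  refine (D.base_eq_or_eq_mate hyz.1).imp_right ?_
  rintro rfl
  refine ⟨?_, rfl⟩
  rintro (rfl | rfl)
  · exact hyz.2 rfl
  · exact hyz.2 (by rw [D.mate_mate]; exact Sym2.eq_swap)

/-- The edge of the `2`-factor leaving a vertex. -/
def edge (x : V) : Sym2 V := s(x, D.succ x)

lemma edge_injective : Function.Injective D.edge := by
  intro x y h
  rcases Sym2.eq_iff.1 h with h | ⟨rfl, h⟩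
  · exact h.1
  · exact absurd h (D.succ_succ_ne y)

lemma mk_mem_image_edge {x y : V} {s : Set V} :
    s(x, y) ∈ D.edge '' s ↔ x ∈ s ∧ y = D.succ x ∨ y ∈ s ∧ x = D.succ y := by
  simp only [Set.mem_image, edge, Sym2.eq_iff]
  constructor
  · rintro ⟨z, hz, ⟨rfl, rfl⟩ | ⟨rfl, rfl⟩⟩
    exacts [.inl ⟨hz, rfl⟩, .inr ⟨hz, rfl⟩]
  · rintro (⟨hx, rfl⟩ | ⟨hy, rfl⟩)
    exacts [⟨x, hx, .inl ⟨rfl, rfl⟩⟩, ⟨y, hy, .inr ⟨rfl, rfl⟩⟩]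

lemma edgeSet_eq_range_edge {F : G.Subgraph}
    (hF : ∀ x y, F.Adj x y ↔ y = D.succ x ∨ x = D.succ y) : F.edgeSet = Set.range D.edge := by
  ext e
  induction e with
  | _ x y => simp only [Subgraph.mem_edgeSet, hF, ← Set.image_univ, mk_mem_image_edge,
      Set.mem_univ, true_and]

/-- A circuit of the `2`-factor as a subgraph. -/
def circuit (c : C) : G.Subgraph where
  verts := {x | D.base x = c}
  Adj x y := D.base x = c ∧ (y = D.succ x ∨ x = D.succ y)
  adj_sub h := D.adj_iff.2 (h.2.imp_right .inl)
  edge_vert h := h.1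
  symm := ⟨by
    rintro x y ⟨h, rfl | rfl⟩
    · exact ⟨by rwa [D.base_succ], .inr rfl⟩
    · exact ⟨by rwa [D.base_succ] at h, .inl rfl⟩⟩

lemma edgeSet_circuit (c : C) : (D.circuit c).edgeSet = D.edge '' {x | D.base x = c} := by
  ext e
  induction e with
  | _ x y =>
    rw [mk_mem_image_edge, Subgraph.mem_edgeSet]
    constructor
    · rintro ⟨h, rfl | rfl⟩
      exacts [.inl ⟨h, rfl⟩, .inr ⟨by rwa [D.base_succ] at h, rfl⟩]
    · rintro (⟨h, rfl⟩ | ⟨h, rfl⟩)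
      exacts [⟨h, .inl rfl⟩, ⟨by rwa [D.base_succ], .inr rfl⟩]

lemma edge_mem_circuit (x : V) : D.edge x ∈ (D.circuit (D.base x)).edgeSet := by
  rw [edgeSet_circuit]
  exact ⟨x, rfl, rfl⟩

lemma connected_circuit [Finite V] (c : C) : (D.circuit c).Connected := by
  obtain ⟨x, rfl⟩ := D.base_surjective c
  refine Subgraph.connected_iff_forall_exists_walk_subgraph _ |>.2 ⟨⟨x, rfl⟩, ?_⟩
  intro u v hu hv
  obtain ⟨k, rfl⟩ := D.exists_iterate_succ_eq (hu.trans hv.symm)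
  clear hv
  induction k with
  | zero => exact ⟨.nil, by simpa [circuit] using hu⟩
  | succ k ih =>
    obtain ⟨p, hp⟩ := ih
    have hadj : (D.circuit (D.base x)).Adj (D.succ^[k] u) (D.succ^[k + 1] u) :=
      ⟨by rw [D.base_iterate_succ, hu], .inl (Function.iterate_succ_apply' _ _ _)⟩
    refine ⟨p.concat hadj.adj_sub, ?_⟩
    rw [Walk.concat_eq_append, Walk.toSubgraph_append]
    exact sup_le hp (by simpa using hadj)

lemma isCircuit_circuit [Finite V] (c : C) : IsCircuit G (D.circuit c) := by
  refine ⟨D.connected_circuit c, fun v hv => ?_⟩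
  have hnbr : (D.circuit c).neighborSet v = {D.succ v, D.succ.symm v} := by
    ext y
    simp only [Subgraph.mem_neighborSet, Set.mem_insert_iff, Set.mem_singleton_iff,
      Equiv.eq_symm_apply, eq_comm (a := D.succ y)]
    exact and_iff_right hv
  rw [hnbr, Set.ncard_pair fun h => D.succ_succ_ne v (by rw [h, D.succ.apply_symm_apply])]

/-- The barbell formed by the circuits through the ends of the walk `w`, together with `w`. -/
def barbell {u v : V} (w : G.Walk u v) : G.Subgraph :=
  D.circuit (D.base u) ⊔ D.circuit (D.base v) ⊔ w.toSubgraph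

lemma circuit_le_barbell_left {u v : V} (w : G.Walk u v) : D.circuit (D.base u) ≤ D.barbell w :=
  le_sup_left.trans le_sup_left

lemma circuit_le_barbell_right {u v : V} (w : G.Walk u v) : D.circuit (D.base v) ≤ D.barbell w :=
  le_sup_right.trans le_sup_left

lemma ncard_edgeSet_barbell_le [Finite V] {u v : V} (w : G.Walk u v) :
    (D.barbell w).edgeSet.ncard ≤ (D.circuit (D.base u)).edgeSet.ncard +
      (D.circuit (D.base v)).edgeSet.ncard + w.length := by
  rw [barbell, Subgraph.edgeSet_sup, Subgraph.edgeSet_sup]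
  refine (Set.ncard_union_le _ _).trans (add_le_add (Set.ncard_union_le _ _) ?_)
  have hw : w.toSubgraph.edgeSet = (w.edges.toFinset : Set (Sym2 V)) := by ext; simp
  rw [hw, Set.ncard_coe_finset, ← w.length_edges]
  exact List.toFinset_card_le _

variable [Fintype V]

lemma ncard_edgeSet_circuit (c : C) : (D.circuit c).edgeSet.ncard = #{x | D.base x = c} := by
  rw [edgeSet_circuit, Set.ncard_image_of_injective _ D.edge_injective, ← Set.ncard_coe_finset,
    Finset.coe_filter_univ]

lemma sum_ncard_edgeSet_circuit_le {ι : Type*} {s : Finset ι} {f : ι → C} (hf : Set.InjOn f s)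
    {p : V → Prop} [DecidablePred p] (hp : ∀ x, ∀ i ∈ s, D.base x = f i → p x) :
    ∑ i ∈ s, (D.circuit (f i)).edgeSet.ncard ≤ #{x | p x} := by
  simp only [ncard_edgeSet_circuit]
  rw [← Finset.card_biUnion]
  · refine Finset.card_le_card fun x hx => ?_
    obtain ⟨i, hi, hxi⟩ := Finset.mem_biUnion.1 hx
    exact (Finset.mem_filter_univ x).2 (hp x i hi ((Finset.mem_filter_univ x).1 hxi))
  · intro i hi k hk hik
    refine Finset.disjoint_left.2 fun x hxi hxk => hik (hf hi hk ?_)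
    rw [← (Finset.mem_filter_univ x).1 hxi, ← (Finset.mem_filter_univ x).1 hxk]

/-- The signs of the edges of the `2`-factor modulo 2, each recorded at the vertex it leaves. -/
def neg (σ : Sym2 V → Bool) (x : V) : ZMod 2 := if σ (D.edge x) then 1 else 0

omit [Fintype V] in
lemma natCast_negCount_image_edge (σ : Sym2 V → Bool) (s : Finset V) :
    (negCount σ (D.edge '' s) : ZMod 2) = ∑ x ∈ s, D.neg σ x := by
  simp only [neg]
  rw [Finset.sum_boole, negCount, ← Set.image_inter_preimage,
    Set.ncard_image_of_injective _ D.edge_injective, ← Set.ncard_coe_finset, Finset.coe_filter]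
  rfl

variable {D} {σ : Sym2 V → Bool}

lemma natCast_negCount_circuit (c : C) :
    (negCount σ (D.circuit c).edgeSet : ZMod 2) = D.boundary (D.neg σ) c := by
  rw [edgeSet_circuit, ← Finset.coe_filter_univ, natCast_negCount_image_edge, D.boundary_apply]

lemma isBalancedCircuit_circuit {c : C} (h : D.boundary (D.neg σ) c = 0) :
    IsBalancedCircuit G σ (D.circuit c) :=
  ⟨D.isCircuit_circuit c, by rwa [← ZMod.natCast_eq_zero_iff_even, natCast_negCount_circuit]⟩

lemma isUnbalancedCircuit_circuit {c : C} (h : D.boundary (D.neg σ) c = 1) :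
    IsUnbalancedCircuit G σ (D.circuit c) :=
  ⟨D.isCircuit_circuit c, by rwa [← ZMod.natCast_eq_one_iff_odd, natCast_negCount_circuit]⟩

lemma isSignCircuit_barbell {u v : V} (hu : D.boundary (D.neg σ) (D.base u) = 1)
    (hv : D.boundary (D.neg σ) (D.base v) = 1) (huv : D.base u ≠ D.base v) {w : G.Walk u v}
    (hw : w.IsPath) (hwu : ∀ x ∈ w.support, D.base x = D.base u → x = u)
    (hwv : ∀ x ∈ w.support, D.base x = D.base v → x = v) : IsSignCircuit G σ (D.barbell w) := by
  refine .inr ⟨D.circuit (D.base u), D.circuit (D.base v), w.toSubgraph, u, v,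
    isUnbalancedCircuit_circuit hu, isUnbalancedCircuit_circuit hv, ⟨w, hw, ?_, ?_⟩, rfl, rfl,
    ?_, ?_, ?_, ?_, rfl⟩
  · ext; simp
  · ext; simp
  · ext x
    simp only [Set.mem_inter_iff, Walk.mem_verts_toSubgraph, Set.mem_singleton_iff]
    exact ⟨fun h => hwu x h.1 h.2, by rintro rfl; exact ⟨w.start_mem_support, rfl⟩⟩
  · ext x
    simp only [Set.mem_inter_iff, Walk.mem_verts_toSubgraph, Set.mem_singleton_iff]
    exact ⟨fun h => hwv x h.1 h.2, by rintro rfl; exact ⟨w.end_mem_support, rfl⟩⟩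
  · rintro x ⟨hxu, hxv⟩
    exact absurd (hxu.symm.trans hxv) huv
  · rw [edgeSet_circuit, edgeSet_circuit, ← Set.image_inter D.edge_injective, Set.image_eq_empty,
      Set.eq_empty_iff_forall_notMem]
    exact fun x hx => huv (hx.1.symm.trans hx.2)

lemma exists_barbell_of_walk {u v : V} (hu : D.boundary (D.neg σ) (D.base u) = 1)
    (hv : D.boundary (D.neg σ) (D.base v) = 1) (huv : D.base u ≠ D.base v) (w : G.Walk u v) :
    ∃ H : G.Subgraph, IsSignCircuit G σ H ∧ D.circuit (D.base u) ≤ H ∧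
      D.circuit (D.base v) ≤ H ∧ H.edgeSet.ncard ≤ (D.circuit (D.base u)).edgeSet.ncard +
        (D.circuit (D.base v)).edgeSet.ncard + w.length := by
  obtain ⟨a, ha, b, hb, p, hp, hlen, hpa, hpb⟩ := exists_isPath_support_inter
    (A := {x | D.base x = D.base u}) (B := {x | D.base x = D.base v}) rfl rfl w
  rw [← show D.base a = D.base u from ha] at hu huv hpa ⊢
  rw [← show D.base b = D.base v from hb] at hv huv hpb ⊢
  exact ⟨D.barbell p, isSignCircuit_barbell hu hv huv hp hpa hpb, D.circuit_le_barbell_left p,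
    D.circuit_le_barbell_right p, (D.ncard_edgeSet_barbell_le p).trans (Nat.add_le_add_left hlen _)⟩

section FaceWalk

variable (D) (j : V → ZMod 2)

omit [Fintype V] in
lemma adj_face_of_eq_one {x : V} (h : j (D.succ x) = 1) : G.Adj (D.succ x) (D.face j x) := by
  rw [RotationSystem.face_of_eq_one h]
  exact D.adj_mate _

omit [Fintype V] in
lemma adj_face_of_ne_one {x : V} (h : j (D.succ x) ≠ 1) : G.Adj x (D.face j x) := by
  rw [RotationSystem.face_of_ne_one h]
  exact D.adj_succ x

/-- The walk along the first `n` steps of the face through `x`. -/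
noncomputable def faceWalk : (n : ℕ) → (x : V) → G.Walk x ((D.face j)^[n] x)
  | 0, _ => .nil
  | n + 1, x =>
    if h : j (D.succ x) = 1 then
      .cons (D.adj_succ x) (.cons (D.adj_face_of_eq_one j h) (faceWalk n (D.face j x)))
    else .cons (D.adj_face_of_ne_one j h) (faceWalk n (D.face j x))

omit [Fintype V] in
lemma length_faceWalk (n : ℕ) (x : V) : (D.faceWalk j n x).length = D.arcLength j n x := by
  induction n generalizing x with
  | zero => rfl
  | succ n ih =>
    rw [faceWalk, RotationSystem.arcLength_succ, ← ih]
    split_ifs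
    · change (D.faceWalk j n (D.face j x)).length + 1 + 1 = _
      omega
    · change (D.faceWalk j n (D.face j x)).length + 1 = _
      omega

omit [Fintype V] in
lemma edge_mem_edges_faceWalk {i n : ℕ} (hi : i < n) (x : V) :
    D.edge ((D.face j)^[i] x) ∈ (D.faceWalk j n x).edges := by
  induction n generalizing i x with
  | zero => exact absurd hi i.not_lt_zero
  | succ n ih =>
    rw [faceWalk]
    cases i with
    | zero =>
      split_ifs with h
      · exact List.mem_cons_self
      · exact List.mem_cons.2
          (.inl (congrArg (s(x, ·)) (RotationSystem.face_of_ne_one h).symm))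
    | succ i =>
      have := ih (Nat.lt_of_succ_lt_succ hi) (D.face j x)
      split_ifs
      · exact List.mem_cons_of_mem _ (List.mem_cons_of_mem _ this)
      · exact List.mem_cons_of_mem _ this

omit [Fintype V] in
lemma mem_support_faceWalk {n : ℕ} {x v : V} (hv : v ∈ (D.faceWalk j n x).support) :
    (∃ i ≤ n, v = (D.face j)^[i] x) ∨
      ∃ k < n, j (D.succ ((D.face j)^[k] x)) = 1 ∧ v = D.succ ((D.face j)^[k] x) := by
  induction n generalizing x with
  | zero => exact .inl ⟨0, le_rfl, List.mem_singleton.1 hv⟩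
  | succ n ih =>
    have hrest : v ∈ (D.faceWalk j n (D.face j x)).support →
        (∃ i ≤ n + 1, v = (D.face j)^[i] x) ∨ ∃ k < n + 1,
          j (D.succ ((D.face j)^[k] x)) = 1 ∧ v = D.succ ((D.face j)^[k] x) := fun hv =>
      (ih hv).imp (fun ⟨i, hi, h⟩ => ⟨i + 1, Nat.succ_le_succ hi, h⟩)
        fun ⟨k, hk, h⟩ => ⟨k + 1, Nat.succ_lt_succ hk, h⟩
    rw [faceWalk] at hv
    split_ifs at hv with h
    · rcases List.mem_cons.1 hv with rfl | hv
      · exact .inl ⟨0, Nat.zero_le _, rfl⟩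
      rcases List.mem_cons.1 hv with rfl | hv
      · exact .inr ⟨0, n.succ_pos, h, rfl⟩
      · exact hrest hv
    · rcases List.mem_cons.1 hv with rfl | hv
      · exact .inl ⟨0, Nat.zero_le _, rfl⟩
      · exact hrest hv

variable {D j}

lemma isPath_faceWalk (hj : ∀ x, j (D.mate x) = j x) (hf : D.IsForest j) {n : ℕ} {x : V}
    (h : D.FirstLeaf j n x) : (D.faceWalk j n x).IsPath := by
  induction n generalizing x with
  | zero => exact .nil
  | succ n ih =>
    have hx : x ∉ (D.faceWalk j n (D.face j x)).support := by
      intro hx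
      rcases D.mem_support_faceWalk j hx with ⟨i, hi, hxi⟩ | ⟨k, hk, hc, hxk⟩
      · exact h.iterate_ne i.succ_pos (Nat.succ_le_succ hi) hxi.symm
      · exact h.succ_iterate_ne hj hf (Nat.succ_lt_succ hk) hc hxk.symm
    rw [faceWalk]
    split_ifs with hc
    · refine ((ih h.face).cons fun hx' => ?_).cons fun hx' => ?_
      · rcases D.mem_support_faceWalk j hx' with ⟨i, hi, hxi⟩ | ⟨k, hk, -, hxk⟩
        · exact h.iterate_ne_succ hj hf i.succ_pos (Nat.succ_le_succ hi) hc hxi.symm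
        · exact h.iterate_ne k.succ_pos (Nat.succ_le_succ hk.le)
            (D.succ.injective hxk).symm
      · exact (List.mem_cons.1 hx').elim (D.adj_succ x).ne hx
    · exact (ih h.face).cons hx

lemma degree_ne_one_or_eq_of_mem_support_faceWalk {n : ℕ} {x v : V} (h : D.FirstLeaf j n x)
    (hv : v ∈ (D.faceWalk j n x).support) :
    D.degree j (D.base v) ≠ 1 ∨ v = (D.face j)^[n] x := by
  rcases D.mem_support_faceWalk j hv with ⟨i, hi, rfl⟩ | ⟨k, hk, -, rfl⟩
  · exact hi.eq_or_lt.symm.imp (h.1 i) fun h => by rw [h]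
  · rw [D.base_succ]
    exact .inl (h.1 k hk)

/-- The walk along the first `n` steps of the face leaving the circuit of `a` through its matching
edge, together with the circuits at its ends. -/
noncomputable def faceBarbell (D : OrientedTwoFactor G C) (j : V → ZMod 2) (n : ℕ) (a : V) :
    G.Subgraph :=
  D.barbell (.cons (D.adj_mate a) (D.faceWalk j n (D.mate a)))

omit [Fintype V] in
lemma edge_mem_faceBarbell {i n : ℕ} (hi : i < n) (a : V) :
    D.edge ((D.face j)^[i] (D.mate a)) ∈ (D.faceBarbell j n a).edgeSet :=
  Subgraph.edgeSet_mono le_sup_right ((Walk.mem_edges_toSubgraph _).2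
    (List.mem_cons_of_mem _ (D.edge_mem_edges_faceWalk j hi _)))

omit [Fintype V] in
lemma ncard_edgeSet_faceBarbell_le [Finite V] (n : ℕ) (a : V) :
    (D.faceBarbell j n a).edgeSet.ncard ≤ (D.circuit (D.base a)).edgeSet.ncard +
      (D.circuit (D.base ((D.face j)^[n] (D.mate a)))).edgeSet.ncard +
      (1 + D.arcLength j n (D.mate a)) := by
  rw [← length_faceWalk, add_comm 1]
  exact D.ncard_edgeSet_barbell_le _

lemma isSignCircuit_faceBarbell (hj : D.IsJoin (D.boundary (D.neg σ)) j)
    (hf : D.IsForest j) {a : V} (ha : a ∈ D.leafDarts j) {n : ℕ}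
    (hn : D.FirstLeaf j n (D.mate a)) :
    IsSignCircuit G σ (D.faceBarbell j n a) := by
  obtain ⟨hja, hleaf⟩ := RotationSystem.mem_leafDarts.1 ha
  have hunb : ∀ c, D.degree j c = 1 → D.boundary (D.neg σ) c = 1 := fun c hc => by
    rw [← hj.boundary_eq, DartGraph.boundary_eq_degree, hc, Nat.cast_one]
  have hne := hn.base_ne hj.mate hf hja
  have hsupp : ∀ v ∈ (D.faceWalk j n (D.mate a)).support, D.base v ≠ D.base a := by
    intro v hv hva
    rcases degree_ne_one_or_eq_of_mem_support_faceWalk hn hv with h | rfl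
    exacts [h (hva ▸ hleaf), hne hva]
  refine isSignCircuit_barbell (hunb _ hleaf) (hunb _ hn.2) hne.symm
    ((isPath_faceWalk hj.mate hf hn).cons fun h => hsupp a h rfl) (fun x hx hxa => ?_)
    fun x hx hxa => ?_
  · exact (List.mem_cons.1 hx).resolve_right fun h => hsupp x h hxa
  · rcases List.mem_cons.1 hx with rfl | hx
    · exact absurd hxa hne.symm
    · exact (degree_ne_one_or_eq_of_mem_support_faceWalk hn hx).resolve_left
        fun h => h (hxa ▸ hn.2)

end FaceWalk

section SignCover

variable {j : V → ZMod 2}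

lemma hasSignCover_of_boundary_eq_zero {p : C → Prop} [DecidablePred p]
    (hp : ∀ c, p c → D.boundary (D.neg σ) c = 0) :
    HasSignCover G σ (D.edge '' {x | p (D.base x)}) #{x | p (D.base x)} := by
  have := Fintype.ofSurjective D.base D.base_surjective
  have h : HasSignCover G σ (⋃ c ∈ Finset.univ.filter p, (D.circuit c).edgeSet)
      (∑ c with p c, (D.circuit c).edgeSet.ncard) := .biUnion fun c hc =>
    IsSignCircuit.hasSignCover
      (.inl (isBalancedCircuit_circuit (hp c ((Finset.mem_filter_univ c).1 hc))))
  refine h.mono ?_ (D.sum_ncard_edgeSet_circuit_le Function.injective_id.injOn ?_)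
  · rintro _ ⟨x, hx, rfl⟩
    exact Set.mem_biUnion (Finset.mem_coe.2 ((Finset.mem_filter_univ _).2 hx))
      (D.edge_mem_circuit x)
  · rintro x _ hc rfl
    exact (Finset.mem_filter_univ _).1 hc

section Faces

variable {n : V → ℕ}

lemma image_edge_subset_biUnion_faceBarbell (hj : ∀ x, j (D.mate x) = j x) (hf : D.IsForest j)
    (hn : ∀ a ∈ D.leafDarts j, D.FirstLeaf j (n a) (D.mate a)) :
    D.edge '' {x | D.degree j (D.base x) ≠ 0} ⊆
      ⋃ a ∈ D.leafDarts j, (D.faceBarbell j (n a) a).edgeSet := by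
  rintro _ ⟨x, hx, rfl⟩
  obtain hx | hx : D.degree j (D.base x) = 1 ∨ 2 ≤ D.degree j (D.base x) := by
    have := Nat.pos_of_ne_zero hx
    omega
  · obtain ⟨a, ha, hax⟩ := RotationSystem.exists_mem_leafDarts hx
    exact Set.mem_biUnion ha (Subgraph.edgeSet_mono (D.circuit_le_barbell_left _)
      (hax ▸ D.edge_mem_circuit x))
  · obtain ⟨a, ha, i, rfl, hi⟩ := RotationSystem.exists_mem_leafDarts_iterate_face_eq hj hf hx
    exact Set.mem_biUnion ha
      (edge_mem_faceBarbell (lt_of_not_ge fun hle => hi _ hle (hn a ha).2) a)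

lemma sum_ncard_edgeSet_faceBarbell_le (hj : ∀ x, j (D.mate x) = j x)
    (hn : ∀ a ∈ D.leafDarts j, D.FirstLeaf j (n a) (D.mate a)) :
    ∑ a ∈ D.leafDarts j, (D.faceBarbell j (n a) a).edgeSet.ncard ≤
      hammingNorm j + #{x | 2 ≤ D.degree j (D.base x)} +
        2 * #{x | D.degree j (D.base x) = 1} := by
  have hstart := D.sum_ncard_edgeSet_circuit_le (RotationSystem.injOn_base_leafDarts (j := j))
    (p := fun x => D.degree j (D.base x) = 1) fun x a ha hxa =>
      hxa ▸ (RotationSystem.mem_leafDarts.1 ha).2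
  have hmem := fun a (ha : a ∈ D.leafDarts j) =>
    (hn a ha).iterate_mem_leafDarts hj (RotationSystem.mem_leafDarts.1 ha).1
  have hend := D.sum_ncard_edgeSet_circuit_le (s := D.leafDarts j)
    (f := fun a => D.base ((D.face j)^[n a] (D.mate a)))
    (fun a ha b hb hab => (RotationSystem.FirstLeaf.eq_of_iterate_eq hj ha hb (hn a ha) (hn b hb)
      le_rfl le_rfl (RotationSystem.injOn_base_leafDarts (hmem a ha) (hmem b hb) hab)).1)
    (p := fun x => D.degree j (D.base x) = 1) fun x a ha hxa => hxa ▸ (hn a ha).2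
  have harcs := RotationSystem.sum_one_add_arcLength_le hj hn
  have hlen := Finset.sum_le_sum fun a (_ : a ∈ D.leafDarts j) =>
    ncard_edgeSet_faceBarbell_le (D := D) (j := j) (n a) a
  rw [Finset.sum_add_distrib, Finset.sum_add_distrib] at hlen
  omega

end Faces

lemma hasSignCover_range_edge_of_isForest (hj : D.IsJoin (D.boundary (D.neg σ)) j)
    (hf : D.IsForest j) :
    HasSignCover G σ (Set.range D.edge) (hammingNorm j + #{x | 2 ≤ D.degree j (D.base x)} +
      2 * #{x | D.degree j (D.base x) = 1} + #{x | D.degree j (D.base x) = 0}) := by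
  choose! n hn using fun a =>
    RotationSystem.exists_firstLeaf (D := D.toRotationSystem) (a := a) hj.mate
  have hleaves : HasSignCover G σ (⋃ a ∈ D.leafDarts j, (D.faceBarbell j (n a) a).edgeSet) _ :=
    .biUnion fun a ha => (isSignCircuit_faceBarbell hj hf ha (hn a ha)).hasSignCover
  have hzero : HasSignCover G σ (D.edge '' {x | D.degree j (D.base x) = 0}) _ :=
    hasSignCover_of_boundary_eq_zero (p := (D.degree j · = 0)) fun c hc => by
      rw [← hj.boundary_eq, DartGraph.boundary_eq_degree, hc, Nat.cast_zero]
  refine (hleaves.union hzero).mono ?_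
    (Nat.add_le_add_right (sum_ncard_edgeSet_faceBarbell_le hj.mate hn) _)
  rintro _ ⟨x, rfl⟩
  by_cases hx : D.degree j (D.base x) = 0
  · exact .inr ⟨x, hx, rfl⟩
  · exact .inl (image_edge_subset_biUnion_faceBarbell hj.mate hf hn ⟨x, hx, rfl⟩)

end SignCover

section JoinCover

variable (D) in
/-- The edges of the `2`-factor selected by `ξ` together with the matching edges selected by `j`. -/
def selection (ξ j : V → ZMod 2) (hj : ∀ x, j (D.mate x) = j x) : SimpleGraph V where
  Adj x y := (y = D.succ x ∧ ξ x = 1) ∨ (x = D.succ y ∧ ξ y = 1) ∨ (y = D.mate x ∧ j x = 1)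
  symm := ⟨by
    rintro x y (h | h | ⟨rfl, h⟩)
    · exact .inr (.inl h)
    · exact .inl h
    · exact .inr (.inr ⟨(D.mate_mate x).symm, by rw [hj, h]⟩)⟩
  loopless := ⟨by
    rintro x (h | h | h)
    · exact (D.adj_succ x).ne h.1
    · exact (D.adj_succ x).ne h.1
    · exact D.mate_ne x h.1.symm⟩

variable {ξ j : V → ZMod 2}

omit [Fintype V] in
lemma selection_le (hj : ∀ x, j (D.mate x) = j x) : D.selection ξ j hj ≤ G := by
  intro x y h
  rw [D.adj_iff]
  rcases h with h | h | h <;> tauto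

lemma degree_selection (hj : ∀ x, j (D.mate x) = j x) (x : V) :
    (D.selection ξ j hj).degree x = (if ξ x = 1 then 1 else 0) +
      (if ξ (D.succ.symm x) = 1 then 1 else 0) + (if j x = 1 then 1 else 0) := by
  have hss : D.succ x ≠ D.succ.symm x := fun h =>
    D.succ_succ_ne x (by rw [h, Equiv.apply_symm_apply])
  have hmp : D.mate x ≠ D.succ.symm x := fun h =>
    D.mate_ne_succ (D.mate x) (by rw [D.mate_mate, h, Equiv.apply_symm_apply])
  have hms := D.mate_ne_succ x
  have hnbr : (D.selection ξ j hj).neighborFinset x =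
      ((if ξ x = 1 then {D.succ x} else ∅) ∪
        (if ξ (D.succ.symm x) = 1 then {D.succ.symm x} else ∅)) ∪
          (if j x = 1 then {D.mate x} else ∅) := by
    ext y
    have hpred : x = D.succ y ↔ y = D.succ.symm x := by rw [Equiv.eq_symm_apply, eq_comm]
    rw [mem_neighborFinset]
    simp only [selection, hpred]
    grind
  rw [← card_neighborFinset_eq_degree, hnbr, Finset.card_union_of_disjoint,
    Finset.card_union_of_disjoint]
  · simp only [apply_ite Finset.card, Finset.card_singleton, Finset.card_empty]
  · split_ifs <;> simp [hss]
  · split_ifs <;> simp [hmp.symm, hms.symm, hmp, hms]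

lemma natCast_degree_selection (hj : ∀ x, j (D.mate x) = j x) (x : V) :
    ((D.selection ξ j hj).degree x : ZMod 2) = ξ x + ξ (D.succ.symm x) + j x := by
  have h : ∀ a : ZMod 2, (if a = 1 then 1 else 0) = a := by decide
  simp only [degree_selection, Nat.cast_add, Nat.cast_ite, Nat.cast_one, Nat.cast_zero, h]

lemma two_mul_card_edgeFinset_selection (hj : ∀ x, j (D.mate x) = j x) :
    2 * #(D.selection ξ j hj).edgeFinset = 2 * hammingNorm ξ + hammingNorm j := by
  rw [← sum_degrees_eq_twice_card_edges]
  simp only [degree_selection, Finset.sum_add_distrib, hammingNorm_eq_card_eq_one,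
    Finset.card_filter]
  rw [Equiv.sum_comp D.succ.symm (fun x => if ξ x = 1 then 1 else 0), two_mul]

lemma hasSignCover_biUnion_odd_degree {Y : SimpleGraph V} (hY : Y ≤ G)
    (hodd : ∀ x, Odd (Y.degree x) → D.boundary (D.neg σ) (D.base x) = 1)
    (hinj : Set.InjOn D.base {x | Odd (Y.degree x)}) :
    HasSignCover G σ (⋃ x ∈ ({x | Odd (Y.degree x)} : Finset V), (D.circuit (D.base x)).edgeSet)
      (#Y.edgeFinset + ∑ x with Odd (Y.degree x), (D.circuit (D.base x)).edgeSet.ncard) := by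
  induction hn : #Y.edgeFinset using Nat.strong_induction_on generalizing Y with
  | _ n ih =>
  by_cases hne : ∃ u, Odd (Y.degree u)
  swap
  · push Not at hne
    exact hasSignCover_empty.mono (by simp [hne]) (Nat.zero_le _)
  obtain ⟨u, hu⟩ := hne
  obtain ⟨v, hvu, hv, p, Y', hY'Y, hcard, hdeg⟩ := exists_walk_odd_degree_iff hu
  have hlen : p.length ≠ 0 := fun h => hvu (Walk.eq_of_length_eq_zero h).symm
  have hcover := ih _ (by omega) (hY'Y.trans hY) (fun x hx => hodd x ((hdeg x).1 hx).1)
    (hinj.mono fun x hx => ((hdeg x).1 hx).1) rfl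
  obtain ⟨B, hB, hBu, hBv, hBlen⟩ := exists_barbell_of_walk (hodd u hu) (hodd v hv)
    (fun h => hvu (hinj hu hv h).symm) (p.mapLe hY)
  have hsplit : Finset.univ.filter (fun x => Odd (Y.degree x)) =
      insert u (insert v (Finset.univ.filter fun x => Odd (Y'.degree x))) := by
    ext x
    simp only [Finset.mem_filter_univ, Finset.mem_insert, hdeg]
    grind
  refine (hB.hasSignCover.union hcover).mono ?_ ?_
  · rw [hsplit, Finset.set_biUnion_insert, Finset.set_biUnion_insert, ← Set.union_assoc]
    exact Set.union_subset_union_left _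
      (Set.union_subset (Subgraph.edgeSet_mono hBu) (Subgraph.edgeSet_mono hBv))
  · rw [hsplit, Finset.sum_insert (by simp [hdeg, hvu.symm]), Finset.sum_insert (by simp [hdeg])]
    rw [Walk.length_mapLe] at hBlen
    omega

lemma hasSignCover_range_edge_of_bijOn {Y : SimpleGraph V} (hY : Y ≤ G)
    (hbij : Set.BijOn D.base {x | Odd (Y.degree x)} {c | D.boundary (D.neg σ) c = 1}) :
    HasSignCover G σ (Set.range D.edge) (#Y.edgeFinset + Fintype.card V) := by
  have hodd := hasSignCover_biUnion_odd_degree hY hbij.mapsTo hbij.injOn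
  have heven := hasSignCover_of_boundary_eq_zero (D := D) (σ := σ)
    (p := (¬ D.boundary (D.neg σ) · = 1)) fun c =>
      not_imp_comm.1 zmod_two_ne_zero_iff.1
  refine (hodd.union heven).mono ?_ ?_
  · rintro _ ⟨x, rfl⟩
    by_cases hx : D.boundary (D.neg σ) (D.base x) = 1
    · obtain ⟨y, hy, hyx⟩ := hbij.surjOn hx
      exact .inl (Set.mem_biUnion (Finset.mem_coe.2 ((Finset.mem_filter_univ y).2 hy))
        (hyx ▸ D.edge_mem_circuit x))
    · exact .inr ⟨x, hx, rfl⟩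
  · have hsum := D.sum_ncard_edgeSet_circuit_le (s := {x | Odd (Y.degree x)}) (f := D.base)
      (by simpa only [Finset.coe_filter_univ] using hbij.injOn)
      (p := fun x => D.boundary (D.neg σ) (D.base x) = 1) fun x y hy hxy =>
        hxy ▸ hbij.mapsTo ((Finset.mem_filter_univ y).1 hy)
    have := Finset.card_filter_add_card_filter_not (s := .univ)
      fun x => D.boundary (D.neg σ) (D.base x) = 1
    rw [Finset.card_univ] at this
    omega

lemma hasSignCover_range_edge_of_isJoin (hj : D.IsJoin (D.boundary (D.neg σ)) j) :
    HasSignCover G σ (Set.range D.edge)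
      ((hammingNorm j + #{x | 2 ≤ D.degree j (D.base x)}) / 2 + Fintype.card V) := by
  obtain ⟨t, htb, htinj, htj⟩ := D.exists_boundary_eq_injOn j
  obtain ⟨ξ, hξ, hnorm⟩ := D.exists_add_comp_succ_symm_eq (q := j + t)
    (by rw [map_add, htb, ← sub_eq_add_of_zmod_two, sub_self])
    (P := fun c => 2 ≤ D.degree j c) fun x hx => by
      rw [Pi.add_apply, htj x (by omega), CharTwo.add_self_eq_zero]
  have hodd : ∀ x, Odd ((D.selection ξ j hj.mate).degree x) ↔ t x = 1 := fun x => by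
    rw [← ZMod.natCast_eq_one_iff_odd, natCast_degree_selection, hξ, Pi.add_apply,
      add_right_comm, CharTwo.add_self_eq_zero, zero_add]
  refine (hasSignCover_range_edge_of_bijOn (selection_le (ξ := ξ) hj.mate) ?_).mono subset_rfl ?_
  · simp only [hodd, ← hj.boundary_eq, ← htb]
    exact DartGraph.bijOn_base htinj
  · have := two_mul_card_edgeFinset_selection (ξ := ξ) hj.mate
    omega

end JoinCover

lemma hasSignCover_range_edge_of_isJoin_of_isForest {j : V → ZMod 2}
    (hj : D.IsJoin (D.boundary (D.neg σ)) j) (hf : D.IsForest j) :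
    HasSignCover G σ (Set.range D.edge) ((4 * Fintype.card V + 2 * hammingNorm j) / 3) := by
  have hcard : #{x | 2 ≤ D.degree j (D.base x)} + #{x | D.degree j (D.base x) = 1} +
      #{x | D.degree j (D.base x) = 0} = Fintype.card V := by
    rw [← Finset.card_univ, Finset.card_filter, Finset.card_filter, Finset.card_filter,
      Finset.card_eq_sum_ones, ← Finset.sum_add_distrib, ← Finset.sum_add_distrib]
    refine Finset.sum_congr rfl fun x _ => ?_
    split_ifs <;> omega
  exact ((hasSignCover_range_edge_of_isJoin hj).min
    (hasSignCover_range_edge_of_isForest hj hf)).mono subset_rfl (by omega)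

end OrientedTwoFactor

lemma two_mul_ncard_edgeSet_of_isCubic [Fintype V] {G : SimpleGraph V} (hG : IsCubic G) :
    2 * G.edgeSet.ncard = 3 * Fintype.card V := by
  classical
  have hdeg : ∀ v, G.degree v = 3 := fun v => by
    rw [← card_neighborSet_eq_degree, ← Nat.card_eq_fintype_card]
    exact hG v
  rw [← coe_edgeFinset, Set.ncard_coe_finset, ← sum_degrees_eq_twice_card_edges]
  simp only [hdeg, Finset.sum_const, Finset.card_univ, smul_eq_mul, mul_comm]

/-- Lemma 2.6. A 2-factor `F` of a 2-edge-connected cubic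
signed graph with an even number of negative edges can be covered by sign-circuits
of total length at most `(10/9)|E(G)|`. -/
theorem stmt2 {V : Type*} [Fintype V] (G : SimpleGraph V) (σ : Sym2 V → Bool)
    (h2ec : TwoEdgeConnected G) (hcubic : IsCubic G)
    (F : G.Subgraph) (hF : IsTwoFactor G F)
    (hEven : Even (negCount σ F.edgeSet)) :
    ∃ 𝓕 : Multiset G.Subgraph, (∀ H ∈ 𝓕, IsSignCircuit G σ H) ∧
      Covers G 𝓕 F.edgeSet ∧
      9 * coverLength G 𝓕 ≤ 10 * G.edgeSet.ncard := by
  obtain ⟨s, D, hD⟩ := exists_orientedTwoFactor hcubic hF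
  have := Fintype.ofFinite (Quotient s)
  have hedge := D.edgeSet_eq_range_edge hD
  have hsum : ∑ c, D.boundary (D.neg σ) c = 0 := by
    rw [D.sum_boundary, ← D.natCast_negCount_image_edge, Finset.coe_univ, Set.image_univ, ← hedge,
      ZMod.natCast_eq_zero_iff_even]
    exact hEven
  obtain ⟨j, hj, hf, hnorm⟩ := DartGraph.exists_isJoin_isForest hsum (D.linked_univ h2ec.1)
    (D.linked_compl_pair h2ec.2)
  obtain ⟨𝓕, hsign, hcov, hlen⟩ := D.hasSignCover_range_edge_of_isJoin_of_isForest hj hf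
  have := two_mul_ncard_edgeSet_of_isCubic hcubic
  exact ⟨𝓕, hsign, hedge ▸ hcov, by omega⟩
end

section
/- Let C be an unbalanced circuit of a flow-admissible cubic signed graph (G,σ) such that G − E(C) is balanced. Then (G,σ) has a family F of sign-circuits covering all edges of C with total length ℓ(F) ≤ (8/9)|E(G)| + |E(C)|. -/
open SimpleGraph

variable {V : Type*}

/-!
Switch the signature so that every negative edge lies on `C`, and classify the vertices of `C` by
the components of `H = G − E(C)`. In `H` a vertex of `C` has degree at most one, so a path of `H`
meets `C` only in its ends, and an arc of `C` with an even number of negative edges and with both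
ends in one component of `H` closes up to a balanced circuit through `H`. Every edge of `C` lies on
such a balanced arc: otherwise a further switching leaves that edge as the only negative edge of
`G`, and then no sign-circuit contains it.

Suppose three vertices of one component cut `C` into three unbalanced arcs. Any two of the arcs
form a balanced arc, which gives three balanced circuits any two of which cover `C`. Their paths in
`H` are taken in a common tripod, so the shortest two of the circuits are short enough.

If there is no such triple, then all balanced arcs of one component lie in its longest one, so one
circuit per component covers `C`. In a minimal subcover by `m` of these arcs no edge of `C` is
covered more than twice and each arc has an edge of its own, so their lengths add up to at most
`2 |C| − m`; the paths lie in different components, so together they have at most `|V| − |C| + m`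
edges.
-/

theorem sum_card_add_card_le_two_mul {ι α : Type*} [Fintype α] [DecidableEq α] {A : Finset ι}
    {S : ι → Finset α} (hprivate : ∀ i ∈ A, ∃ x ∈ S i, ∀ j ∈ A, x ∈ S j → j = i)
    (hmult : ∀ x, (A.filter fun i => x ∈ S i).card ≤ 2) :
    ∑ i ∈ A, (S i).card + A.card ≤ 2 * Fintype.card α := by
  have hdouble : ∑ i ∈ A, (S i).card = ∑ x, (A.filter fun i => x ∈ S i).card := by
    simpa [Finset.bipartiteAbove, Finset.bipartiteBelow] using
      Finset.sum_card_bipartiteAbove_eq_sum_card_bipartiteBelow (s := A) (t := Finset.univ)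
        fun i x => x ∈ S i
  rcases isEmpty_or_nonempty α with _ | _
  · have : A = ∅ := Finset.eq_empty_of_forall_notMem fun i hi => isEmptyElim (hprivate i hi).choose
    simp [this]
  choose! p hpS hp using hprivate
  have hinj : Set.InjOn p A := fun i hi j hj hij => hp j hj i hi (hij ▸ hpS i hi)
  have hpoint (x : α) :
      (A.filter fun i => x ∈ S i).card + (if x ∈ A.image p then 1 else 0) ≤ 2 := by
    split_ifs with hx
    · obtain ⟨i, hi, rfl⟩ := Finset.mem_image.1 hx
      have hsub : (A.filter fun j => p i ∈ S j) ⊆ {i} := fun j hj =>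
        Finset.mem_singleton.2 (hp i hi j (Finset.mem_filter.1 hj).1 (Finset.mem_filter.1 hj).2)
      exact Nat.add_le_add_right (Finset.card_le_card hsub) 1
    · exact hmult x
  calc ∑ i ∈ A, (S i).card + A.card
      = ∑ x, ((A.filter fun i => x ∈ S i).card + if x ∈ A.image p then 1 else 0) := by
        rw [Finset.sum_add_distrib, hdouble, Finset.sum_ite_mem, Finset.univ_inter,
          Finset.sum_const, smul_eq_mul, mul_one, Finset.card_image_of_injOn hinj]
    _ ≤ ∑ _x : α, 2 := Finset.sum_le_sum fun x _ => hpoint x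
    _ = 2 * Fintype.card α := by rw [Finset.sum_const, smul_eq_mul, mul_comm, Finset.card_univ]

section CyclicArcs

variable {n : ℕ} {K : Type*} {w : ZMod n → ZMod 2} {φ : ZMod n → K} {a a' e : ZMod n} {d d' : ℕ}

/-- The arc of the cycle `ZMod n` formed by the `d` consecutive elements from `a` on. An element `k`
of the cycle stands for the edge of a circuit between its vertices number `k` and `k + 1`, so the
ends of the arc are the vertices number `a` and `a + d`. -/
def arc (a : ZMod n) (d : ℕ) : Finset (ZMod n) := (Finset.range d).image fun i : ℕ => a + i

/-- The sign of the arc of length `d` from `a` under the edge signs `w`, written additively. -/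
def arcSum (w : ZMod n → ZMod 2) (a : ZMod n) (d : ℕ) : ZMod 2 := ∑ i ∈ Finset.range d, w (a + i)

theorem arcSum_add (w : ZMod n → ZMod 2) (a : ZMod n) (d d' : ℕ) :
    arcSum w a (d + d') = arcSum w a d + arcSum w (a + d) d' := by
  simp only [arcSum, Finset.sum_range_add, Nat.cast_add, add_assoc]

theorem injOn_add_natCast (a : ZMod n) (hd : d ≤ n) :
    Set.InjOn (fun i : ℕ => a + i) (Finset.range d) := fun _ hi _ hj hij =>
  CharP.natCast_injOn_Iio (ZMod n) n ((Finset.mem_range.1 hi).trans_le hd)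
    ((Finset.mem_range.1 hj).trans_le hd) (add_left_cancel hij)

theorem add_natCast_add_natCast_add_natCast_eq_self {i j r : ℕ} (hr : i + j + r = n)
    (a : ZMod n) : a + i + j + r = a := by
  rw [add_assoc, add_assoc, ← Nat.cast_add, ← Nat.cast_add, ← add_assoc, hr, ZMod.natCast_self,
    add_zero]

theorem card_arc (a : ZMod n) (hd : d ≤ n) : (arc a d).card = d := by
  rw [arc, Finset.card_image_of_injOn (injOn_add_natCast a hd), Finset.card_range]

/-- The arc of length `d` from `a` is balanced and joins two vertices of the same class of `φ`;
closed up by a path of sign `0` it becomes a balanced circuit. In the application the class of a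
vertex of a circuit `C` is its component in the graph without the edges of `C`. -/
structure IsBalancedArc (w : ZMod n → ZMod 2) (φ : ZMod n → K) (a : ZMod n) (d : ℕ) : Prop where
  pos : 0 < d
  lt : d < n
  class_eq : φ (a + d) = φ a
  arcSum_eq : arcSum w a d = 0

/-- The vertices `a`, `a + i` and `a + i + j` belong to one class of `φ`, and the arcs from the
first to the second and from the second to the third are unbalanced. If the whole cycle is
unbalanced then so is the third of the arcs into which these vertices cut it. -/
structure IsUnbalancedTriple (w : ZMod n → ZMod 2) (φ : ZMod n → K) (a : ZMod n) (i j : ℕ) :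
    Prop where
  lt : i + j < n
  class_eq₁ : φ (a + i) = φ a
  class_eq₂ : φ (a + i + j) = φ a
  arcSum_eq₁ : arcSum w a i = 1
  arcSum_eq₂ : arcSum w (a + i) j = 1

theorem IsUnbalancedTriple.isBalancedArc {i j : ℕ} (h : IsUnbalancedTriple w φ a i j) :
    IsBalancedArc w φ a (i + j) := by
  refine ⟨Nat.pos_of_ne_zero fun hij => ?_, h.lt, ?_, ?_⟩
  · have hi : i = 0 := by omega
    simpa [hi, arcSum] using h.arcSum_eq₁
  · rw [Nat.cast_add, ← add_assoc, h.class_eq₂]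
  · rw [arcSum_add, h.arcSum_eq₁, h.arcSum_eq₂, CharTwo.add_self_eq_zero]

variable [NeZero n]

theorem mem_arc (hd : d ≤ n) : e ∈ arc a d ↔ (e - a).val < d := by
  simp only [arc, Finset.mem_image, Finset.mem_range]
  constructor
  · rintro ⟨i, hi, rfl⟩
    rwa [add_sub_cancel_left, ZMod.val_natCast_of_lt (hi.trans_le hd)]
  · exact fun h => ⟨(e - a).val, h, by rw [ZMod.natCast_zmod_val, add_sub_cancel]⟩

theorem arcSum_self (w : ZMod n → ZMod 2) (a : ZMod n) : arcSum w a n = ∑ k, w k := by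
  have huniv : arc a n = Finset.univ :=
    Finset.eq_univ_of_card _ (by rw [card_arc a le_rfl, ZMod.card])
  rw [← huniv, arc, Finset.sum_image (injOn_add_natCast a le_rfl), arcSum]

theorem arcSum_add_self (hw : ∑ k, w k = 1) (a : ZMod n) (d : ℕ) :
    arcSum w a (d + n) = arcSum w a d + 1 := by
  rw [arcSum_add, arcSum_self, hw]

theorem IsUnbalancedTriple.rotate (hw : ∑ k, w k = 1) {i j r : ℕ}
    (h : IsUnbalancedTriple w φ a i j) (hr : i + j + r = n) :
    IsUnbalancedTriple w φ (a + i) j r := by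
  have hclose := add_natCast_add_natCast_add_natCast_eq_self hr a
  refine ⟨?_, h.class_eq₂.trans h.class_eq₁.symm, by rw [hclose, h.class_eq₁], h.arcSum_eq₂, ?_⟩
  · have hi : i ≠ 0 := fun hi => by simpa [hi, arcSum] using h.arcSum_eq₁
    omega
  · have htotal : arcSum w a (i + j + r) = 1 := by rw [hr, arcSum_self, hw]
    rw [arcSum_add, arcSum_add, h.arcSum_eq₁, h.arcSum_eq₂, CharTwo.add_self_eq_zero,
      zero_add, Nat.cast_add, ← add_assoc] at htotal
    exact htotal

theorem mem_arc_or_mem_arc {i j r : ℕ} (hr : i + j + r = n) (a e : ZMod n) :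
    e ∈ arc a (i + j) ∨ e ∈ arc (a + (i : ZMod n)) (j + r) := by
  simp only [arc, Finset.mem_image, Finset.mem_range]
  obtain ⟨t, ht, rfl⟩ : ∃ t < n, e = a + (t : ℕ) :=
    ⟨(e - a).val, ZMod.val_lt _, by rw [ZMod.natCast_zmod_val, add_sub_cancel]⟩
  by_cases hti : t < i + j
  · exact Or.inl ⟨t, hti, rfl⟩
  · exact Or.inr ⟨t - i, by omega, by rw [Nat.cast_sub (by omega)]; ring⟩

theorem IsBalancedArc.arcSum_eq_zero_of_longest (hw : ∑ k, w k = 1)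
    (hno : ∀ a i j, ¬ IsUnbalancedTriple w φ a i j) (h : IsBalancedArc w φ a d)
    (hmax : ∀ a' d', IsBalancedArc w φ a' d' → φ a' = φ a → d' ≤ d) {t : ℕ} (ht : t < n)
    (hφ : φ (a + t) = φ a) : arcSum w a t = 0 := by
  have hlt := h.lt
  by_contra hne
  have hst : arcSum w a t = 1 := Fin.eq_one_of_ne_zero _ hne
  rcases lt_trichotomy t d with htd | rfl | htd
  · obtain ⟨j, rfl⟩ := Nat.exists_eq_add_of_le htd.le
    refine hno a t j ⟨hlt, hφ, ?_, hst, ?_⟩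
    · simpa [add_assoc] using h.class_eq
    · have hsum := h.arcSum_eq
      rw [arcSum_add, hst, CharTwo.add_eq_zero] at hsum
      exact hsum.symm
  · exact hne h.arcSum_eq
  · obtain ⟨r, hr⟩ : ∃ r, t + r = d + n := ⟨n - t + d, by omega⟩
    have hcast : a + (t : ℕ) + (r : ℕ) = a + (d : ℕ) := by
      rw [add_assoc, ← Nat.cast_add, hr, Nat.cast_add, ZMod.natCast_self, add_zero]
    have hsum : arcSum w (a + t) r = 0 := by
      have := arcSum_add w a t r
      rwa [hr, arcSum_add_self hw, h.arcSum_eq, hst, zero_add, left_eq_add] at this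
    have := hmax (a + t) r ⟨by omega, by omega, by rw [hcast, h.class_eq, hφ], hsum⟩ hφ
    omega

theorem IsBalancedArc.val_sub_add_le (hw : ∑ k, w k = 1)
    (hno : ∀ a i j, ¬ IsUnbalancedTriple w φ a i j) (h : IsBalancedArc w φ a d)
    (hmax : ∀ a' d', IsBalancedArc w φ a' d' → φ a' = φ a → d' ≤ d)
    (h' : IsBalancedArc w φ a' d') (hφ : φ a' = φ a) : (a' - a).val + d' ≤ d := by
  obtain ⟨t, ht, rfl⟩ : ∃ t < n, a' = a + (t : ℕ) :=
    ⟨(a' - a).val, ZMod.val_lt _, by rw [ZMod.natCast_zmod_val, add_sub_cancel]⟩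
  rw [add_sub_cancel_left, ZMod.val_natCast_of_lt ht]
  have heven {k : ℕ} := h.arcSum_eq_zero_of_longest hw hno hmax (t := k)
  have hend : arcSum w a (t + d') = 0 := by
    rw [arcSum_add, h'.arcSum_eq, heven ht hφ, add_zero]
  have hclass : φ (a + (t + d' : ℕ)) = φ a := by
    rw [Nat.cast_add, ← add_assoc, h'.class_eq, hφ]
  have hlt := h'.lt
  have hpos := h'.pos
  by_cases hwrap : t + d' < n
  · exact hmax a (t + d') ⟨by omega, hwrap, hclass, hend⟩ rfl
  · obtain ⟨u, hu⟩ := Nat.exists_eq_add_of_le' (not_lt.1 hwrap)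
    rw [hu, Nat.cast_add, ZMod.natCast_self, add_zero] at hclass
    rw [hu, arcSum_add_self hw, heven (by omega) hclass] at hend
    exact absurd hend (by decide)

theorem IsBalancedArc.arc_subset_of_longest (hw : ∑ k, w k = 1)
    (hno : ∀ a i j, ¬ IsUnbalancedTriple w φ a i j) (h : IsBalancedArc w φ a d)
    (hmax : ∀ a' d', IsBalancedArc w φ a' d' → φ a' = φ a → d' ≤ d)
    (h' : IsBalancedArc w φ a' d') (hφ : φ a' = φ a) : arc a' d' ⊆ arc a d := by
  intro e he
  rw [mem_arc h'.lt.le] at he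
  rw [mem_arc h.lt.le, ← sub_add_sub_cancel e a' a]
  have := ZMod.val_add_le (e - a') (a' - a)
  have := h.val_sub_add_le hw hno hmax h' hφ
  omega

theorem exists_pair_arc_cover {ι : Type*} {A : Finset ι} {a : ι → ZMod n} {d : ι → ℕ}
    (hA : A.Nonempty) (hd : ∀ i ∈ A, d i ≤ n) (he : ∀ i ∈ A, e ∈ arc (a i) (d i)) :
    ∃ i ∈ A, ∃ j ∈ A, ∀ k ∈ A, arc (a k) (d k) ⊆ arc (a i) (d i) ∪ arc (a j) (d j) := by
  obtain ⟨i, hi, hleft⟩ := A.exists_max_image (fun i => (e - a i).val) hA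
  obtain ⟨j, hj, hright⟩ := A.exists_max_image (fun j => d j - (e - a j).val) hA
  refine ⟨i, hi, j, hj, fun k hk x hx => ?_⟩
  have hval (m : ι) : (x - a m).val = ((x - e).val + (e - a m).val) % n := by
    rw [← ZMod.val_add, sub_add_sub_cancel]
  have hei := (mem_arc (hd i hi)).1 (he i hi)
  have hdi := hd i hi
  have hdk := hd k hk
  specialize hleft k hk
  specialize hright k hk
  rw [mem_arc (hd k hk), hval] at hx
  rw [Finset.mem_union, mem_arc (hd i hi), mem_arc (hd j hj), hval, hval]
  have hxe := ZMod.val_lt (x - e)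
  by_cases hwrap : (x - e).val + (e - a k).val < n
  · right
    rw [Nat.mod_eq_of_lt hwrap] at hx
    exact (Nat.mod_le _ _).trans_lt (by omega)
  · left
    rw [Nat.mod_eq_sub_mod (by omega)]
    exact (Nat.mod_le _ _).trans_lt (by omega)

theorem exists_thin_arc_subcover {ι : Type*} {A : Finset ι} {a : ι → ZMod n} {d : ι → ℕ}
    (hd : ∀ i ∈ A, d i ≤ n) (hcov : ∀ e, ∃ i ∈ A, e ∈ arc (a i) (d i)) :
    ∃ B ⊆ A, (∀ e, ∃ i ∈ B, e ∈ arc (a i) (d i)) ∧ ∑ i ∈ B, d i + B.card ≤ 2 * n := by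
  classical
  obtain ⟨B, hBA, hB⟩ := exists_minimal_le_of_wellFoundedLT
    (fun B : Finset ι => ∀ e, ∃ i ∈ B, e ∈ arc (a i) (d i)) A hcov
  have hprivate : ∀ i ∈ B, ∃ x ∈ arc (a i) (d i), ∀ j ∈ B, x ∈ arc (a j) (d j) → j = i := by
    intro i hi
    have hnot := hB.not_prop_of_lt (Finset.erase_ssubset hi)
    push Not at hnot
    obtain ⟨x, hx⟩ := hnot
    have honly : ∀ j ∈ B, x ∈ arc (a j) (d j) → j = i := fun j hj hxj =>
      by_contra fun hji => hx j (Finset.mem_erase.2 ⟨hji, hj⟩) hxj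
    obtain ⟨j, hj, hxj⟩ := hB.prop x
    exact ⟨x, honly j hj hxj ▸ hxj, honly⟩
  have hmult (x : ZMod n) : (B.filter fun i => x ∈ arc (a i) (d i)).card ≤ 2 := by
    obtain hempty | hne := (B.filter fun i => x ∈ arc (a i) (d i)).eq_empty_or_nonempty
    · simp [hempty]
    obtain ⟨i, hi, j, hj, hpair⟩ := exists_pair_arc_cover (e := x) hne
      (fun k hk => hd k (hBA (Finset.mem_filter.1 hk).1)) fun k hk => (Finset.mem_filter.1 hk).2
    refine (Finset.card_le_card fun k hk => ?_).trans (Finset.card_le_two (a := i) (b := j))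
    obtain ⟨y, hy, honly⟩ := hprivate k (Finset.mem_filter.1 hk).1
    rw [Finset.mem_insert, Finset.mem_singleton]
    exact (Finset.mem_union.1 (hpair k hk hy)).imp
      (fun h => (honly i (Finset.mem_filter.1 hi).1 h).symm)
      fun h => (honly j (Finset.mem_filter.1 hj).1 h).symm
  refine ⟨B, hBA, hB.prop, ?_⟩
  have hsum := sum_card_add_card_le_two_mul hprivate hmult
  rwa [Finset.sum_congr rfl fun i hi => card_arc (a i) (hd i (hBA hi)), ZMod.card] at hsum

theorem exists_longest_isBalancedArc (h : IsBalancedArc w φ a d) :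
    ∃ b l, IsBalancedArc w φ b l ∧ φ b = φ a ∧
      ∀ a' d', IsBalancedArc w φ a' d' → φ a' = φ a → d' ≤ l := by
  have hfin : {p : ZMod n × ℕ | IsBalancedArc w φ p.1 p.2 ∧ φ p.1 = φ a}.Finite :=
    (Set.finite_univ.prod (Set.finite_Iio n)).subset fun p hp => ⟨trivial, hp.1.lt⟩
  obtain ⟨⟨b, l⟩, ⟨hb, hφ⟩, hmax⟩ := Set.exists_max_image _ Prod.snd hfin ⟨(a, d), h, rfl⟩
  exact ⟨b, l, hb, hφ, fun a' d' h' hφ' => hmax (a', d') ⟨h', hφ'⟩⟩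

theorem exists_thin_arc_cover (hw : ∑ k, w k = 1) (hno : ∀ a i j, ¬ IsUnbalancedTriple w φ a i j)
    (hcov : ∀ e, ∃ a d, IsBalancedArc w φ a d ∧ e ∈ arc a d) :
    ∃ (A : Finset K) (a : K → ZMod n) (d : K → ℕ),
      (∀ κ ∈ A, IsBalancedArc w φ (a κ) (d κ) ∧ φ (a κ) = κ) ∧
      (∀ e, ∃ κ ∈ A, e ∈ arc (a κ) (d κ)) ∧ ∑ κ ∈ A, d κ + A.card ≤ 2 * n := by
  classical
  have hbest : ∀ κ, (∃ a d, IsBalancedArc w φ a d ∧ φ a = κ) → ∃ b l, IsBalancedArc w φ b l ∧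
      φ b = κ ∧ ∀ a d, IsBalancedArc w φ a d → φ a = κ → arc a d ⊆ arc b l := by
    rintro κ ⟨a, d, h, rfl⟩
    obtain ⟨b, l, hb, hφ, hmax⟩ := exists_longest_isBalancedArc h
    exact ⟨b, l, hb, hφ, fun a' d' h' hφ' =>
      hb.arc_subset_of_longest hw hno (hφ ▸ hmax) h' (hφ'.trans hφ.symm)⟩
  choose! b l hb hφ hmax using hbest
  let A := (Finset.univ.image φ).filter fun κ => ∃ a d, IsBalancedArc w φ a d ∧ φ a = κ
  have hA {κ : K} (hκ : κ ∈ A) := (Finset.mem_filter.1 hκ).2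
  have hcovA (e : ZMod n) : ∃ κ ∈ A, e ∈ arc (b κ) (l κ) := by
    obtain ⟨a, d, h, he⟩ := hcov e
    exact ⟨φ a, Finset.mem_filter.2 ⟨Finset.mem_image_of_mem φ (Finset.mem_univ a), a, d, h, rfl⟩,
      hmax _ ⟨a, d, h, rfl⟩ a d h rfl he⟩
  obtain ⟨B, hBA, hB, hsum⟩ := exists_thin_arc_subcover (fun κ hκ => (hb κ (hA hκ)).lt.le) hcovA
  exact ⟨B, b, l, fun κ hκ => ⟨hb κ (hA (hBA hκ)), hφ κ (hA (hBA hκ))⟩, hB, hsum⟩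

theorem arcSum_eq_of_forall_notMem_arc (hw : ∑ k, w k = 1)
    (he : ∀ a d, IsBalancedArc w φ a d → e ∉ arc a d) {i j : ℕ} (hij : i ≤ j) (hj : j < n)
    (hφ : φ (e + 1 + i) = φ (e + 1 + j)) : arcSum w (e + 1) i = arcSum w (e + 1) j := by
  by_contra hne
  obtain ⟨m, rfl⟩ := Nat.exists_eq_add_of_le hij
  obtain ⟨r, hr⟩ : ∃ r, m + r = n := ⟨n - m, by omega⟩
  have hm : m ≠ 0 := fun h => hne (by rw [h, add_zero])
  have hsum : arcSum w (e + 1 + i) m = 1 :=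
    Fin.eq_one_of_ne_zero _ fun h => hne ((arcSum_add ..).trans (add_eq_left.2 h)).symm
  -- The arc that complements the one from `i` to `i + m` is balanced and contains `e`.
  refine he (e + 1 + (i + m : ℕ)) r ⟨by omega, by omega, ?_, ?_⟩
    (Finset.mem_image.2 ⟨n - (i + m + 1), Finset.mem_range.2 (by omega), ?_⟩)
  · rw [← hφ, add_assoc, ← Nat.cast_add, add_assoc i, hr, Nat.cast_add, ZMod.natCast_self, add_zero]
  · have := arcSum_add w (e + 1 + i) m r
    rwa [hr, arcSum_self, hw, hsum, left_eq_add, add_assoc _ (i : ZMod n), ← Nat.cast_add] at this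
  · have : ((i + m + 1 + (n - (i + m + 1)) : ℕ) : ZMod n) = 0 := by
      rw [Nat.add_sub_cancel' hj, ZMod.natCast_self]
    push_cast at this ⊢
    linear_combination this

theorem exists_potential_of_forall_notMem_arc (hw : ∑ k, w k = 1)
    (he : ∀ a d, IsBalancedArc w φ a d → e ∉ arc a d) :
    ∃ g : K → ZMod 2, ∀ k, w k = g (φ k) + g (φ (k + 1)) + if k = e then 1 else 0 := by
  let Q (k : ZMod n) : ZMod 2 := arcSum w (e + 1) (k - (e + 1)).val
  have hQ : Function.FactorsThrough Q φ := by
    intro x y hxy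
    wlog hle : (x - (e + 1)).val ≤ (y - (e + 1)).val generalizing x y
    · exact (this hxy.symm (le_of_not_ge hle)).symm
    · refine arcSum_eq_of_forall_notMem_arc hw he hle (ZMod.val_lt _) ?_
      rwa [ZMod.natCast_zmod_val, ZMod.natCast_zmod_val, add_sub_cancel, add_sub_cancel]
  have hindex {i : ℕ} (hi : i < n) : Q (e + 1 + i) = arcSum w (e + 1) i := by
    simp only [Q, add_sub_cancel_left, ZMod.val_natCast_of_lt hi]
  refine ⟨Function.extend φ Q 0, fun k => ?_⟩
  rw [hQ.extend_apply, hQ.extend_apply]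
  obtain ⟨i, hi, rfl⟩ : ∃ i < n, k = e + 1 + (i : ℕ) :=
    ⟨(k - (e + 1)).val, ZMod.val_lt _, by rw [ZMod.natCast_zmod_val, add_sub_cancel]⟩
  have hstep : arcSum w (e + 1) (i + 1) = arcSum w (e + 1) i + w (e + 1 + i) :=
    Finset.sum_range_succ _ _
  have hsucc : e + 1 + (i : ZMod n) + 1 = e + 1 + (i + 1 : ℕ) := by push_cast; ring
  have hlast : e + 1 + (i : ZMod n) = e ↔ i + 1 = n := by
    rw [add_assoc, add_eq_left, add_comm, ← Nat.cast_succ, ZMod.natCast_eq_zero_iff]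
    exact ⟨fun h => (Nat.le_of_dvd i.succ_pos h).antisymm' hi, fun h => h ▸ dvd_rfl⟩
  by_cases hin : i + 1 = n
  · have hQ₀ : Q (e + 1 + (i + 1 : ℕ)) = 0 := by simp [Q, hin, arcSum]
    rw [hin, arcSum_self, hw] at hstep
    rw [hsucc, hQ₀, hindex hi, if_pos (hlast.2 hin), add_zero, hstep, ← add_assoc,
      CharTwo.add_self_eq_zero, zero_add]
  · rw [hsucc, hindex hi, hindex (by omega), if_neg (mt hlast.1 hin), hstep, add_zero, ← add_assoc,
      CharTwo.add_self_eq_zero, zero_add]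

end CyclicArcs

section Signs

variable {G : SimpleGraph V} {u v x : V}

/-- The sign of an edge written additively: `1` for a negative edge and `0` for a positive one. -/
def edgeSign (σ : Sym2 V → Bool) (e : Sym2 V) : ZMod 2 := if σ e then 1 else 0

theorem edgeSign_eq_one_iff {σ : Sym2 V → Bool} {e : Sym2 V} : edgeSign σ e = 1 ↔ σ e = true := by
  simp [edgeSign]

/-- The sign of a walk written additively: the sum of the signs of its edges. -/
def walkSign (σ : Sym2 V → Bool) (p : G.Walk u v) : ZMod 2 := (p.edges.map (edgeSign σ)).sum

theorem walkSign_eq_zero_of_forall {σ : Sym2 V → Bool} {p : G.Walk u v}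
    (h : ∀ e ∈ p.edges, edgeSign σ e = 0) : walkSign σ p = 0 :=
  List.sum_eq_zero (by simpa [walkSign] using h)

theorem walkSign_append (σ : Sym2 V → Bool) (p : G.Walk u v) (q : G.Walk v x) :
    walkSign σ (p.append q) = walkSign σ p + walkSign σ q := by
  simp [walkSign]

theorem natCast_negCount_coe (σ : Sym2 V → Bool) (s : Finset (Sym2 V)) :
    (negCount σ s : ZMod 2) = ∑ e ∈ s, edgeSign σ e := by
  classical
  have hfilter : (s : Set (Sym2 V)) ∩ {e | σ e = true} = (s.filter fun e => σ e = true) := by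
    ext; simp
  rw [negCount, hfilter, Set.ncard_coe_finset, Finset.card_filter, Nat.cast_sum]
  exact Finset.sum_congr rfl fun e _ => by simp [edgeSign]

theorem negCount_toSubgraph_eq_walkSign (σ : Sym2 V → Bool) {p : G.Walk u v} (hp : p.IsTrail) :
    (negCount σ p.toSubgraph.edgeSet : ZMod 2) = walkSign σ p := by
  classical
  have hedges : p.toSubgraph.edgeSet = p.edges.toFinset := by ext; simp
  rw [hedges, natCast_negCount_coe, List.sum_toFinset _ hp.edges_nodup, walkSign]

/-- Switching the signature `σ` at the vertices `v` with `f v = 1`: the edges with exactly one such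
end change their sign. -/
def switch (σ : Sym2 V → Bool) (f : V → ZMod 2) (e : Sym2 V) : Bool :=
  edgeSign σ e + Sym2.lift ⟨fun u v => f u + f v, fun _ _ => add_comm _ _⟩ e = 1

theorem edgeSign_switch (σ : Sym2 V → Bool) (f : V → ZMod 2) (u v : V) :
    edgeSign (switch σ f) s(u, v) = edgeSign σ s(u, v) + (f u + f v) := by
  have hdecide : ∀ x : ZMod 2, (if decide (x = 1) then 1 else 0) = x := by decide
  exact hdecide _

theorem walkSign_switch (σ : Sym2 V → Bool) (f : V → ZMod 2) (p : G.Walk u v) :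
    walkSign (switch σ f) p = walkSign σ p + (f u + f v) := by
  induction p with
  | nil => simp [walkSign, CharTwo.add_self_eq_zero]
  | @cons a b c h p ih =>
    simp only [walkSign, Walk.edges_cons, List.map_cons, List.sum_cons, edgeSign_switch] at ih ⊢
    linear_combination ih + CharTwo.add_self_eq_zero (f b)

end Signs

section Circuits

variable {G : SimpleGraph V} {C : G.Subgraph}

theorem isCircuit_toSubgraph {u : V} {p : G.Walk u u} (hp : p.IsCycle) :
    IsCircuit G p.toSubgraph :=
  ⟨p.toSubgraph_connected, fun _ hv =>
    hp.ncard_neighborSet_toSubgraph_eq_two (p.mem_verts_toSubgraph.1 hv)⟩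

theorem IsCircuit.exists_isCycle [Finite V] (hC : IsCircuit G C) :
    ∃ (u : V) (p : G.Walk u u), p.IsCycle ∧ p.toSubgraph = C := by
  classical
  have := Fintype.ofFinite V
  have hcyc : C.spanningCoe.IsCycles := fun x ⟨_, hy⟩ => hC.2 x (C.edge_vert hy)
  obtain ⟨v, hv⟩ := hC.1.nonempty
  have hnbr {x : V} (hx : x ∈ C.verts) : (C.spanningCoe.neighborSet x).Nonempty :=
    Set.nonempty_of_ncard_ne_zero ((hC.2 x hx).trans_ne two_ne_zero)
  obtain ⟨p, hp, hverts⟩ := hcyc.exists_cycle_toSubgraph_verts_eq_connectedComponentSupp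
    (c := C.spanningCoe.connectedComponentMk v) rfl (hnbr hv)
  have hadj {x y : V} (hx : x ∈ p.support) : p.toSubgraph.Adj x y ↔ C.Adj x y :=
    hp.adj_toSubgraph_iff_of_isCycles hcyc (p.mem_verts_toSubgraph.2 hx) y
  have hsupp (x : V) : x ∈ p.support ↔ x ∈ C.verts := by
    rw [← p.mem_verts_toSubgraph]
    refine ⟨fun hx => ?_, fun hx => ?_⟩
    · have htwo := hp.ncard_neighborSet_toSubgraph_eq_two (p.mem_verts_toSubgraph.1 hx)
      obtain ⟨y, hy⟩ := Set.nonempty_of_ncard_ne_zero (htwo.trans_ne two_ne_zero)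
      exact C.edge_vert (p.toSubgraph.adj_sub hy)
    · rw [hverts]
      exact ConnectedComponent.sound ((hC.1.coe.preconnected ⟨x, hx⟩ ⟨v, hv⟩).map
        C.coeEmbeddingSpanningCoe.toHom)
  refine ⟨v, p.mapLe C.spanningCoe_le, hp.mapLe _, Subgraph.ext ?_ ?_⟩
  · ext x
    simp [hsupp]
  · ext x y
    rw [Walk.adj_toSubgraph_mapLe]
    by_cases hx : x ∈ p.support
    · exact hadj hx
    · refine iff_of_false (fun h => hx ?_) fun h => hx ((hsupp x).2 (C.edge_vert h))
      exact p.mem_verts_toSubgraph.1 (p.toSubgraph.edge_vert h)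

theorem IsCircuit.natCast_negCount_switch [Finite V] (hC : IsCircuit G C) (σ : Sym2 V → Bool)
    (f : V → ZMod 2) : (negCount (switch σ f) C.edgeSet : ZMod 2) = negCount σ C.edgeSet := by
  obtain ⟨u, p, hp, rfl⟩ := hC.exists_isCycle
  rw [negCount_toSubgraph_eq_walkSign _ hp.isTrail, negCount_toSubgraph_eq_walkSign _ hp.isTrail,
    walkSign_switch, CharTwo.add_self_eq_zero, add_zero]

theorem isBalancedCircuit_switch [Finite V] {σ : Sym2 V → Bool} {f : V → ZMod 2} :
    IsBalancedCircuit G (switch σ f) C ↔ IsBalancedCircuit G σ C :=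
  and_congr_right fun hC => by
    rw [← ZMod.natCast_eq_zero_iff_even, hC.natCast_negCount_switch, ZMod.natCast_eq_zero_iff_even]

theorem isUnbalancedCircuit_switch [Finite V] {σ : Sym2 V → Bool} {f : V → ZMod 2} :
    IsUnbalancedCircuit G (switch σ f) C ↔ IsUnbalancedCircuit G σ C :=
  and_congr_right fun hC => by
    rw [← ZMod.natCast_eq_one_iff_odd, hC.natCast_negCount_switch, ZMod.natCast_eq_one_iff_odd]

theorem isSignCircuit_switch [Finite V] {σ : Sym2 V → Bool} {f : V → ZMod 2} :
    IsSignCircuit G (switch σ f) C ↔ IsSignCircuit G σ C := by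
  simp only [IsSignCircuit, IsBarbell, isBalancedCircuit_switch, isUnbalancedCircuit_switch]

theorem IsBalancedGraph.walkSign_eq_zero {σ : Sym2 V → Bool} (hG : IsBalancedGraph G σ) {u : V}
    {p : G.Walk u u} (hp : p.IsCycle) : walkSign σ p = 0 := by
  rw [← negCount_toSubgraph_eq_walkSign σ hp.isTrail, ZMod.natCast_eq_zero_iff_even]
  exact hG _ (isCircuit_toSubgraph hp)

theorem exists_switch_sup_edge {F : SimpleGraph V} {σ : Sym2 V → Bool} {f : V → ZMod 2} {u v : V}
    (hf : ∀ e ∈ F.edgeSet, edgeSign (switch σ f) e = 0)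
    (hpath : ∀ p : F.Walk v u, p.IsPath → walkSign σ p = edgeSign σ s(u, v)) :
    ∃ g : V → ZMod 2, ∀ e ∈ (F ⊔ edge u v).edgeSet, edgeSign (switch σ g) e = 0 := by
  classical
  set c := edgeSign (switch σ f) s(u, v) with hcdef
  have hc : F.Reachable u v → c = 0 := by
    intro h
    obtain ⟨p, hp⟩ := h.symm.exists_isPath
    have hp₀ : walkSign (switch σ f) p = 0 :=
      walkSign_eq_zero_of_forall fun e he => hf e (p.edges_subset_edgeSet he)
    rwa [walkSign_switch, hpath p hp, add_comm (f v), ← edgeSign_switch] at hp₀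
  let g (x : V) : ZMod 2 := f x + if F.Reachable u x then c else 0
  have huv : edgeSign (switch σ g) s(u, v) = 0 := by
    have hgu : g u = f u + c := congrArg (f u + ·) (if_pos (Reachable.refl u))
    have hgv : g v = f v := by
      by_cases h : F.Reachable u v
      · simp [g, hc h]
      · simp [g, h]
    rw [edgeSign_switch] at hcdef ⊢
    rw [hgu, hgv]
    linear_combination CharTwo.add_self_eq_zero c - hcdef
  refine ⟨g, fun e => ?_⟩
  induction e with | h x y =>
  rw [mem_edgeSet, sup_adj, edge_adj]
  rintro (hxy | ⟨⟨rfl, rfl⟩ | ⟨rfl, rfl⟩, -⟩)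
  · have hreach : F.Reachable u x ↔ F.Reachable u y :=
      ⟨fun h => h.trans hxy.reachable, fun h => h.trans hxy.symm.reachable⟩
    have hxy₀ := hf s(x, y) hxy
    rw [edgeSign_switch] at hxy₀ ⊢
    simp only [g, hreach]
    linear_combination hxy₀ + CharTwo.add_self_eq_zero (if F.Reachable u y then c else 0)
  · exact huv
  · rwa [Sym2.eq_swap]

theorem IsBalancedGraph.exists_switch [Finite V] {σ : Sym2 V → Bool} (hG : IsBalancedGraph G σ) :
    ∃ f : V → ZMod 2, ∀ e ∈ G.edgeSet, edgeSign (switch σ f) e = 0 := by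
  obtain ⟨F, -, hF⟩ := Finite.exists_le_maximal (a := (⊥ : SimpleGraph V))
    (p := fun F => F ≤ G ∧ ∃ f : V → ZMod 2, ∀ e ∈ F.edgeSet, edgeSign (switch σ f) e = 0)
    ⟨bot_le, 0, by simp⟩
  obtain ⟨hFG, f, hf⟩ := hF.prop
  suffices G ≤ F from ⟨f, fun e he => hf e (edgeSet_mono this he)⟩
  intro u v huv
  by_contra hnot
  have hpath (p : F.Walk v u) (hp : p.IsPath) : walkSign σ p = edgeSign σ s(u, v) := by
    have hcycle : (Walk.cons huv (p.mapLe hFG)).IsCycle :=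
      (Walk.cons_isCycle_iff _ huv).2 ⟨hp.mapLe hFG, fun he =>
        hnot (p.adj_of_mem_edges (by rwa [Walk.edges_mapLe_eq_edges] at he))⟩
    have := hG.walkSign_eq_zero hcycle
    simpa [walkSign, CharTwo.add_eq_zero, eq_comm (b := edgeSign σ s(u, v))] using this
  refine hnot (hF.le_of_ge ⟨sup_le hFG ?_, exists_switch_sup_edge hf hpath⟩ le_sup_left ?_)
  · exact (edge_le_iff _).2 (Or.inr huv)
  · exact Or.inr ((edge_adj ..).2 ⟨Or.inl ⟨rfl, rfl⟩, huv.ne⟩)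

end Circuits

section CyclicEnumerations

variable {G : SimpleGraph V} {C : G.Subgraph} {n : ℕ} {c : ZMod n → V}

/-- The edge joining the vertices number `k` and `k + 1` of a cyclic sequence of vertices. -/
def stepEdge (c : ZMod n → V) (k : ZMod n) : Sym2 V := s(c k, c (k + 1))

/-- The sign of the edge joining the vertices number `k` and `k + 1` of a cyclic sequence of
vertices, written additively. -/
def stepSign (σ : Sym2 V → Bool) (c : ZMod n → V) (k : ZMod n) : ZMod 2 := edgeSign σ (stepEdge c k)

/-- `c` lists the vertices of the circuit `C` in their cyclic order, so that `stepEdge c` lists its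
edges. -/
structure IsCyclicEnum (C : G.Subgraph) (c : ZMod n → V) : Prop where
  three_le : 3 ≤ n
  injective : Function.Injective c
  verts_eq : C.verts = Set.range c
  edgeSet_eq : C.edgeSet = Set.range (stepEdge c)

theorem IsCircuit.exists_isCyclicEnum [Finite V] (hC : IsCircuit G C) :
    ∃ (n : ℕ) (_ : NeZero n) (c : ZMod n → V), IsCyclicEnum C c := by
  obtain ⟨u, p, hp, rfl⟩ := hC.exists_isCycle
  have hlen := hp.three_le_length
  have : NeZero p.length := ⟨by omega⟩
  have hget {i : ℕ} (hi : i ≤ p.length) : p.getVert (i : ZMod p.length).val = p.getVert i := by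
    obtain hlt | rfl := hi.lt_or_eq
    · rw [ZMod.val_natCast_of_lt hlt]
    · rw [ZMod.natCast_self, ZMod.val_zero, p.getVert_zero, p.getVert_length]
  have hstep {i : ℕ} (hi : i < p.length) :
      stepEdge (fun k : ZMod p.length => p.getVert k.val) i =
        s(p.getVert i, p.getVert (i + 1)) := by
    simp only [stepEdge, ← Nat.cast_succ, hget hi.le, hget hi]
  refine ⟨p.length, this, fun k => p.getVert k.val, hlen, fun k l hkl => ?_, ?_, ?_⟩
  · exact ZMod.val_injective _ (hp.getVert_injOn' (Nat.le_sub_one_of_lt k.val_lt)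
      (Nat.le_sub_one_of_lt l.val_lt) hkl)
  · ext x
    rw [p.mem_verts_toSubgraph, Walk.mem_support_iff_exists_getVert]
    exact ⟨fun ⟨i, hx, hi⟩ => ⟨i, (hget hi).trans hx⟩, fun ⟨k, hx⟩ => ⟨k.val, hx, k.val_lt.le⟩⟩
  · ext e
    induction e with | h x y =>
    rw [Subgraph.mem_edgeSet, p.toSubgraph_adj_iff]
    refine ⟨fun ⟨i, he, hi⟩ => ⟨i, (hstep hi).trans he⟩, fun ⟨k, he⟩ => ⟨k.val, ?_, k.val_lt⟩⟩
    rw [← he, ← hstep k.val_lt, k.natCast_zmod_val]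

namespace IsCyclicEnum

theorem apply_mem (hc : IsCyclicEnum C c) (k : ZMod n) : c k ∈ C.verts :=
  hc.verts_eq ▸ Set.mem_range_self k

theorem stepEdge_mem (hc : IsCyclicEnum C c) (k : ZMod n) : stepEdge c k ∈ C.edgeSet :=
  hc.edgeSet_eq ▸ Set.mem_range_self k

theorem stepEdge_injective (hc : IsCyclicEnum C c) : Function.Injective (stepEdge c) := by
  intro k l h
  rw [stepEdge, stepEdge, Sym2.eq_iff] at h
  obtain ⟨hkl, -⟩ | ⟨hk, hl⟩ := h
  · exact hc.injective hkl
  · have h₂ : ((2 : ℕ) : ZMod n) = 0 := by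
      have hk := hc.injective hk
      have hl := hc.injective hl
      push_cast
      linear_combination hl - hk
    have := Nat.le_of_dvd two_pos ((ZMod.natCast_eq_zero_iff 2 n).1 h₂)
    have := hc.three_le
    omega

theorem ncard_verts (hc : IsCyclicEnum C c) : C.verts.ncard = n := by
  rw [hc.verts_eq, Set.ncard_range_of_injective hc.injective, Nat.card_zmod]

theorem ncard_edgeSet (hc : IsCyclicEnum C c) : C.edgeSet.ncard = n := by
  rw [hc.edgeSet_eq, Set.ncard_range_of_injective hc.stepEdge_injective, Nat.card_zmod]

theorem sum_stepSign [NeZero n] (hc : IsCyclicEnum C c) (σ : Sym2 V → Bool) :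
    ∑ k, stepSign σ c k = negCount σ C.edgeSet := by
  classical
  have himage : C.edgeSet = (Finset.univ.image (stepEdge c) : Finset (Sym2 V)) := by
    simp [hc.edgeSet_eq]
  rw [himage, natCast_negCount_coe, Finset.sum_image hc.stepEdge_injective.injOn]
  rfl

theorem exists_arcWalk (hc : IsCyclicEnum C c) (a : ZMod n) (d : ℕ) :
    ∃ p : G.Walk (c a) (c (a + d)), p.support = (List.range (d + 1)).map (fun i : ℕ => c (a + i)) ∧
      p.edges = (List.range d).map (fun i : ℕ => stepEdge c (a + i)) := by
  induction d with
  | zero => exact ⟨Walk.nil.copy rfl (by simp), by simp⟩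
  | succ d ih =>
    obtain ⟨p, hsupp, hedges⟩ := ih
    have hlast : c (a + d + 1) = c (a + (d + 1 : ℕ)) := by rw [Nat.cast_succ, add_assoc]
    have hadj : G.Adj (c (a + d)) (c (a + d + 1)) := C.adj_sub (hc.stepEdge_mem (a + d))
    refine ⟨(p.concat hadj).copy rfl hlast, ?_, ?_⟩
    · rw [Walk.support_copy, Walk.support_concat, hsupp, List.range_succ (n := d + 1),
        List.map_append, List.map_singleton, hlast]
    · rw [Walk.edges_copy, Walk.edges_concat, hedges, List.range_succ, List.map_append,
        List.map_singleton, List.concat_eq_append, stepEdge]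

end IsCyclicEnum

end CyclicEnumerations

section Paths

variable {H : SimpleGraph V} {S : Set V} {u v x : V}

theorem eq_start_or_eq_end_of_subsingleton {p : H.Walk u v} (hp : p.IsPath) (hx : x ∈ p.support)
    (hsub : (H.neighborSet x).Subsingleton) : x = u ∨ x = v := by
  by_contra! hne
  obtain ⟨i, rfl, hi⟩ := Walk.mem_support_iff_exists_getVert.1 hx
  have hi₀ : i ≠ 0 := fun h => hne.1 (by rw [h, p.getVert_zero])
  have hlt : i < p.length := hi.lt_of_ne fun h => hne.2 (by rw [h, p.getVert_length])
  have htwo := hp.ncard_neighborSet_toSubgraph_internal_eq_two hi₀ hlt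
  obtain ⟨y, z, hyz, hnbrs⟩ := Set.ncard_eq_two.1 htwo
  have hmem : ∀ w ∈ ({y, z} : Set V), w ∈ H.neighborSet (p.getVert i) :=
    hnbrs ▸ p.toSubgraph.neighborSet_subset _
  exact hyz (hsub (hmem y (by simp)) (hmem z (by simp)))

theorem ncard_edgeSet_toSubgraph {p : H.Walk u v} (hp : p.IsTrail) :
    p.toSubgraph.edgeSet.ncard = p.length := by
  classical
  have hedges : p.toSubgraph.edgeSet = p.edges.toFinset := by ext; simp
  rw [hedges, Set.ncard_coe_finset, List.toFinset_card_of_nodup hp.edges_nodup, p.length_edges]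

theorem ncard_support {p : H.Walk u v} (hp : p.IsPath) :
    {x | x ∈ p.support}.ncard = p.length + 1 := by
  classical
  rw [← List.coe_toFinset, Set.ncard_coe_finset, List.toFinset_card_of_nodup hp.support_nodup,
    p.length_support]

theorem length_le_ncard_supp_diff_add_one [Finite V]
    (hS : ∀ x ∈ S, (H.neighborSet x).Subsingleton) {p : H.Walk u v} (hp : p.IsPath) :
    p.length ≤ ((H.connectedComponentMk u).supp \ S).ncard + 1 := by
  classical
  have hsub : {x | x ∈ p.support} ⊆ ((H.connectedComponentMk u).supp \ S) ∪ {u, v} := by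
    intro x hx
    by_cases hxS : x ∈ S
    · exact Or.inr (eq_start_or_eq_end_of_subsingleton hp hx (hS x hxS))
    · exact Or.inl ⟨ConnectedComponent.sound (p.takeUntil x hx).reverse.reachable, hxS⟩
  have hle := (Set.ncard_le_ncard hsub (Set.toFinite _)).trans (Set.ncard_union_le _ _)
  have hends : ({u, v} : Set V).ncard ≤ 2 := by
    simpa using Set.ncard_insert_le u {v}
  rw [ncard_support hp] at hle
  omega

theorem notMem_tail_support {p : H.Walk u v} (hp : p.IsPath) : u ∉ p.support.tail := by
  have hnodup := hp.support_nodup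
  rw [← p.cons_tail_support] at hnodup
  exact (List.nodup_cons.1 hnodup).1

theorem isPath_append {p : H.Walk u v} {q : H.Walk v x} (hp : p.IsPath) (hq : q.IsPath)
    (h : ∀ y ∈ p.support, y ∈ q.support → y = v) : (p.append q).IsPath := by
  rw [Walk.isPath_def, Walk.support_append]
  exact hp.support_nodup.append hq.support_nodup.tail fun y hy hy' =>
    notMem_tail_support hq (h y hy (List.mem_of_mem_tail hy') ▸ hy')

theorem exists_isPath_meeting_support_once (p : H.Walk u v) (h : H.Reachable x u) :
    ∃ (y : V) (t : H.Walk x y), t.IsPath ∧ y ∈ p.support ∧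
      ∀ z ∈ t.support, z ∈ p.support → z = y := by
  classical
  obtain ⟨w, hw⟩ := h.exists_isPath
  obtain ⟨y, hyp, hyw, hfirst⟩ := w.exists_mem_support_forall_mem_support_imp_eq p.support.toFinset
    ⟨u, by simp⟩
  simp only [List.mem_toFinset] at hyp hfirst
  exact ⟨y, w.takeUntil y hyw, hw.takeUntil hyw, hyp, fun z hz hzp => hfirst z hzp hz⟩

theorem exists_tripod (huv : H.Reachable u v) (hvx : H.Reachable v x) :
    ∃ (p : H.Walk u v) (q : H.Walk v x) (r : H.Walk x u), p.IsPath ∧ q.IsPath ∧ r.IsPath ∧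
      p.length + q.length + r.length + 2 = 2 * {y | y ∈ p.support ∨ y ∈ q.support}.ncard := by
  classical
  obtain ⟨p, hp⟩ := huv.exists_isPath
  obtain ⟨y, t, ht, hyp, honce⟩ := exists_isPath_meeting_support_once p (huv.trans hvx).symm
  have hq : ((p.dropUntil y hyp).reverse.append t.reverse).IsPath :=
    isPath_append (hp.dropUntil hyp).reverse ht.reverse fun z hz hzt =>
      honce z (by simpa using hzt) (p.support_dropUntil_subset_support hyp (by simpa using hz))
  have hr : (t.append (p.takeUntil y hyp).reverse).IsPath :=
    isPath_append ht (hp.takeUntil hyp).reverse fun z hzt hz =>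
      honce z hzt (p.support_takeUntil_subset_support hyp (by simpa using hz))
  refine ⟨p, _, _, hp, hq, hr, ?_⟩
  have hunion : {z | z ∈ p.support ∨ z ∈ ((p.dropUntil y hyp).reverse.append t.reverse).support} =
      {z | z ∈ p.support} ∪ {z | z ∈ t.support} := by
    ext z
    have hdrop : z ∈ (p.dropUntil y hyp).support → z ∈ p.support :=
      fun hz => p.support_dropUntil_subset_support hyp hz
    simp only [Set.mem_ofPred_eq, Set.mem_union, Walk.mem_support_append_iff, Walk.support_reverse,
      List.mem_reverse]
    tauto
  have hinter : {z | z ∈ p.support} ∩ {z | z ∈ t.support} = {y} := by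
    ext z
    exact ⟨fun ⟨hz, hzt⟩ => honce z hzt hz, by rintro rfl; exact ⟨hyp, t.end_mem_support⟩⟩
  have hcard := Set.ncard_union_add_ncard_inter {z | z ∈ p.support} {z | z ∈ t.support}
    p.support.finite_toSet t.support.finite_toSet
  have hlength := congrArg Walk.length (p.take_spec hyp)
  rw [hinter, Set.ncard_singleton, ncard_support hp, ncard_support ht] at hcard
  rw [Walk.length_append] at hlength
  rw [hunion, Walk.length_append, Walk.length_append, Walk.length_reverse, Walk.length_reverse,
    Walk.length_reverse]
  omega

theorem exists_tripod_length_le [Finite V] (hS : ∀ x ∈ S, (H.neighborSet x).Subsingleton)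
    (huv : H.Reachable u v) (hvx : H.Reachable v x) :
    ∃ (p : H.Walk u v) (q : H.Walk v x) (r : H.Walk x u), p.IsPath ∧ q.IsPath ∧ r.IsPath ∧
      p.length + q.length + r.length ≤ 2 * Sᶜ.ncard + 4 := by
  obtain ⟨p, q, r, hp, hq, hr, hlength⟩ := exists_tripod huv hvx
  refine ⟨p, q, r, hp, hq, hr, ?_⟩
  have hsub : {y | y ∈ p.support ∨ y ∈ q.support} ⊆ Sᶜ ∪ {u, v, x} := by
    intro y hy
    by_cases hyS : y ∈ S
    · obtain hy | hy := hy
      · obtain rfl | rfl := eq_start_or_eq_end_of_subsingleton hp hy (hS y hyS) <;> simp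
      · obtain rfl | rfl := eq_start_or_eq_end_of_subsingleton hq hy (hS y hyS) <;> simp
    · exact Or.inl hyS
  have hle := (Set.ncard_le_ncard hsub (Set.toFinite _)).trans (Set.ncard_union_le _ _)
  have hends : ({u, v, x} : Set V).ncard ≤ 3 :=
    (Set.ncard_insert_le _ _).trans (Nat.succ_le_succ (by simpa using Set.ncard_insert_le v {x}))
  omega

theorem sum_ncard_supp_diff_le [Finite V] (A : Finset H.ConnectedComponent) (S : Set V) :
    ∑ κ ∈ A, (κ.supp \ S).ncard ≤ Sᶜ.ncard := by
  have hdisj : (A : Set H.ConnectedComponent).PairwiseDisjoint fun κ => κ.supp \ S :=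
    fun κ _ κ' _ h => (H.pairwise_disjoint_supp_connectedComponent h).mono
      Set.sdiff_subset Set.sdiff_subset
  rw [← finsum_mem_coe_finset, ← A.finite_toSet.ncard_biUnion (fun _ _ => Set.toFinite _) hdisj]
  exact Set.ncard_le_ncard (Set.iUnion₂_subset fun κ _ x hx => hx.2) (Set.toFinite _)

end Paths

section CircuitsThroughArcs

variable {G : SimpleGraph V} {C D : G.Subgraph} {n : ℕ} {c : ZMod n → V} {σ : Sym2 V → Bool}

/-- The component, in the graph without the edges of the circuit `C`, of the vertex number `k` of
`C`. The arcs of `C` are classified by these components. -/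
def offComponent (C : G.Subgraph) (c : ZMod n → V) (k : ZMod n) :
    (G.deleteEdges C.edgeSet).ConnectedComponent :=
  (G.deleteEdges C.edgeSet).connectedComponentMk (c k)

theorem IsCyclicEnum.exists_arcPath (hc : IsCyclicEnum C c) (a : ZMod n) {d : ℕ} (hd : d < n) :
    ∃ p : G.Walk (c a) (c (a + d)), p.IsPath ∧ p.length = d ∧ (∀ x ∈ p.support, x ∈ C.verts) ∧
      (∀ e, e ∈ p.edges ↔ ∃ k ∈ arc a d, stepEdge c k = e) ∧
      walkSign σ p = arcSum (stepSign σ c) a d := by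
  obtain ⟨p, hsupport, hedges⟩ := hc.exists_arcWalk a d
  refine ⟨p, ?_, ?_, fun x hx => ?_, fun e => ?_, ?_⟩
  · rw [Walk.isPath_def, hsupport]
    refine List.Nodup.map_on (fun i hi j hj hij => ?_) List.nodup_range
    exact injOn_add_natCast a (Nat.succ_le_of_lt hd) (by simpa using hi) (by simpa using hj)
      (hc.injective hij)
  · rw [← p.length_edges, hedges, List.length_map, List.length_range]
  · rw [hsupport] at hx
    obtain ⟨i, -, rfl⟩ := List.mem_map.1 hx
    exact hc.apply_mem _
  · simp [hedges, arc]
  · rw [walkSign, hedges, List.map_map, arcSum, ← List.toFinset_range,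
      List.sum_toFinset _ List.nodup_range]
    rfl

theorem isCycle_append_deleteEdges (hdeg : ∀ x ∈ C.verts,
      ((G.deleteEdges C.edgeSet).neighborSet x).Subsingleton)
    {u v : V} {p : G.Walk u v} (hp : p.IsPath) (hpos : 0 < p.length)
    (hverts : ∀ x ∈ p.support, x ∈ C.verts) (hedges : ∀ e ∈ p.edges, e ∈ C.edgeSet)
    {q : (G.deleteEdges C.edgeSet).Walk v u} (hq : q.IsPath) :
    (p.append (q.mapLe (G.deleteEdges_le _))).IsCycle := by
  rw [Walk.isCycle_def, Walk.isTrail_append, Walk.tail_support_append,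
    Walk.support_mapLe_eq_support, Walk.edges_mapLe_eq_edges]
  refine ⟨⟨hp.isTrail, (hq.mapLe _).isTrail, fun e he he' => ?_⟩, fun h => ?_,
    hp.support_nodup.tail.append hq.support_nodup.tail fun x hx hx' => ?_⟩
  · have hdel := q.edges_subset_edgeSet he'
    rw [edgeSet_deleteEdges] at hdel
    exact hdel.2 (hedges e he)
  · have hlength := congrArg Walk.length h
    rw [Walk.length_append, Walk.length_nil] at hlength
    omega
  · obtain rfl | rfl := eq_start_or_eq_end_of_subsingleton hq (List.mem_of_mem_tail hx')
      (hdeg x (hverts x (List.mem_of_mem_tail hx)))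
    · exact notMem_tail_support hq hx'
    · exact notMem_tail_support hp hx

theorem IsBalancedArc.exists_isBalancedCircuit (hc : IsCyclicEnum C c) (hdeg : ∀ x ∈ C.verts,
      ((G.deleteEdges C.edgeSet).neighborSet x).Subsingleton)
    (hσ : ∀ e ∈ (G.deleteEdges C.edgeSet).edgeSet, edgeSign σ e = 0) {a b : ZMod n} {d : ℕ}
    (h : IsBalancedArc (stepSign σ c) (offComponent C c) a d) (hb : a + d = b)
    {q : (G.deleteEdges C.edgeSet).Walk (c b) (c a)} (hq : q.IsPath) :
    ∃ D : G.Subgraph, IsBalancedCircuit G σ D ∧ D.edgeSet.ncard = d + q.length ∧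
      ∀ k ∈ arc a d, stepEdge c k ∈ D.edgeSet := by
  subst hb
  obtain ⟨p, hp, hlength, hverts, hedges, hsign⟩ := hc.exists_arcPath (σ := σ) a h.lt
  have hcycle : (p.append (q.mapLe (G.deleteEdges_le _))).IsCycle := by
    refine isCycle_append_deleteEdges hdeg hp (h.pos.trans_eq hlength.symm) hverts
      (fun e he => ?_) hq
    obtain ⟨k, -, rfl⟩ := (hedges e).1 he
    exact hc.stepEdge_mem k
  have hq₀ : walkSign σ (q.mapLe (G.deleteEdges_le _)) = 0 :=
    walkSign_eq_zero_of_forall fun e he =>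
      hσ e (q.edges_subset_edgeSet (by rwa [Walk.edges_mapLe_eq_edges] at he))
  refine ⟨_, ⟨isCircuit_toSubgraph hcycle, ?_⟩, ?_, fun k hk => ?_⟩
  · rw [← ZMod.natCast_eq_zero_iff_even, negCount_toSubgraph_eq_walkSign σ hcycle.isTrail,
      walkSign_append, hsign, h.arcSum_eq, hq₀, add_zero]
  · rw [ncard_edgeSet_toSubgraph hcycle.isTrail, Walk.length_append, hlength,
      Walk.length_mapLe]
  · rw [Walk.mem_edges_toSubgraph, Walk.edges_append]
    exact List.mem_append_left _ ((hedges _).2 ⟨k, hk, rfl⟩)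

theorem odd_negCount_iff_mem {e : Sym2 V} (he : ∀ e' ∈ G.edgeSet, σ e' = true ↔ e' = e) :
    Odd (negCount σ D.edgeSet) ↔ e ∈ D.edgeSet := by
  have hinter : D.edgeSet ∩ {e' | σ e' = true} = D.edgeSet ∩ {e} :=
    Set.ext fun e' => and_congr_right fun h => he e' (D.edgeSet_subset h)
  rw [negCount, hinter]
  by_cases heD : e ∈ D.edgeSet
  · simp [heD]
  · simp [heD]

theorem IsSignCircuit.notMem_edgeSet {e : Sym2 V} (he : ∀ e' ∈ G.edgeSet, σ e' = true ↔ e' = e)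
    (hD : IsSignCircuit G σ D) : e ∉ D.edgeSet := by
  obtain ⟨-, heven⟩ | ⟨C₁, C₂, -, -, -, h₁, h₂, -, -, -, -, -, -, hdisj, -⟩ := hD
  · rwa [← odd_negCount_iff_mem he, Nat.not_odd_iff_even]
  · have hmem : e ∈ C₁.edgeSet ∩ C₂.edgeSet :=
      ⟨(odd_negCount_iff_mem he).1 h₁.2, (odd_negCount_iff_mem he).1 h₂.2⟩
    exact absurd hmem (hdisj ▸ Set.notMem_empty e)

theorem IsCyclicEnum.exists_isBalancedArc_of_mem_edgeSet [Finite V] [NeZero n]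
    (hc : IsCyclicEnum C c) (hσ : ∀ e ∈ (G.deleteEdges C.edgeSet).edgeSet, edgeSign σ e = 0)
    (hodd : ∑ k, stepSign σ c k = 1) (hD : IsSignCircuit G σ D) {k : ZMod n}
    (hk : stepEdge c k ∈ D.edgeSet) :
    ∃ a d, IsBalancedArc (stepSign σ c) (offComponent C c) a d ∧ k ∈ arc a d := by
  classical
  by_contra! hnone
  obtain ⟨g, hg⟩ := exists_potential_of_forall_notMem_arc hodd hnone
  let f (x : V) : ZMod 2 := g ((G.deleteEdges C.edgeSet).connectedComponentMk x)
  refine (isSignCircuit_switch (f := f).2 hD).notMem_edgeSet (fun e he => ?_) hk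
  have hedge : edgeSign (switch σ f) e = if e = stepEdge c k then 1 else 0 := by
    by_cases heC : e ∈ C.edgeSet
    · obtain ⟨l, rfl⟩ : ∃ l, stepEdge c l = e := by rwa [hc.edgeSet_eq] at heC
      have hl : edgeSign σ (stepEdge c l) = f (c l) + f (c (l + 1)) + if l = k then 1 else 0 := hg l
      rw [stepEdge, edgeSign_switch, ← stepEdge, hl]
      simp only [hc.stepEdge_injective.eq_iff]
      linear_combination CharTwo.add_self_eq_zero (f (c l) + f (c (l + 1)))
    · have hne : e ≠ stepEdge c k := fun h => heC (h ▸ hc.stepEdge_mem k)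
      have heH : e ∈ (G.deleteEdges C.edgeSet).edgeSet := by
        rw [edgeSet_deleteEdges]; exact ⟨he, heC⟩
      rw [if_neg hne]
      induction e with | h x y =>
      have hxy : f x = f y := congrArg g (ConnectedComponent.sound (Adj.reachable heH))
      rw [edgeSign_switch, hσ _ heH, hxy, CharTwo.add_self_eq_zero, add_zero]
  rw [← edgeSign_eq_one_iff, hedge]
  simp

end CircuitsThroughArcs

section Covers

variable {G : SimpleGraph V} {C : G.Subgraph} {n : ℕ} {c : ZMod n → V} {σ : Sym2 V → Bool}

theorem IsCircuit.subsingleton_neighborSet_deleteEdges [Finite V] (hC : IsCircuit G C) {x : V}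
    (hx : x ∈ C.verts) (hdeg : (G.neighborSet x).ncard ≤ 3) :
    ((G.deleteEdges C.edgeSet).neighborSet x).Subsingleton := by
  have hdiff : (G.deleteEdges C.edgeSet).neighborSet x = G.neighborSet x \ C.neighborSet x := by
    ext y
    simp
  have hcard := Set.ncard_sdiff_add_ncard_of_subset (C.neighborSet_subset x)
  rw [hC.2 x hx, ← hdiff] at hcard
  exact Set.ncard_le_one_iff_subsingleton.1 (by omega)

theorem exists_covers_of_pairwise_covers {E : Set (Sym2 V)} {D₁ D₂ D₃ : G.Subgraph}
    (h₁₂ : E ⊆ D₁.edgeSet ∪ D₂.edgeSet) (h₂₃ : E ⊆ D₂.edgeSet ∪ D₃.edgeSet)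
    (h₃₁ : E ⊆ D₃.edgeSet ∪ D₁.edgeSet) :
    ∃ 𝓕 ⊆ ({D₁, D₂, D₃} : Multiset G.Subgraph), Covers G 𝓕 E ∧
      3 * coverLength G 𝓕 ≤ 2 * (D₁.edgeSet.ncard + D₂.edgeSet.ncard + D₃.edgeSet.ncard) := by
  have hpair {D D' : G.Subgraph} (h : E ⊆ D.edgeSet ∪ D'.edgeSet) : Covers G {D, D'} E :=
    fun e he => by simpa using h he
  have hlength (D D' : G.Subgraph) :
      coverLength G {D, D'} = D.edgeSet.ncard + D'.edgeSet.ncard := by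
    simp [coverLength]
  obtain h | h | h :
      3 * (D₁.edgeSet.ncard + D₂.edgeSet.ncard) ≤
        2 * (D₁.edgeSet.ncard + D₂.edgeSet.ncard + D₃.edgeSet.ncard) ∨
      3 * (D₂.edgeSet.ncard + D₃.edgeSet.ncard) ≤
        2 * (D₁.edgeSet.ncard + D₂.edgeSet.ncard + D₃.edgeSet.ncard) ∨
      3 * (D₃.edgeSet.ncard + D₁.edgeSet.ncard) ≤
        2 * (D₁.edgeSet.ncard + D₂.edgeSet.ncard + D₃.edgeSet.ncard) := by omega
  · exact ⟨{D₁, D₂}, by simp [Multiset.subset_iff], hpair h₁₂, by rwa [hlength]⟩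
  · exact ⟨{D₂, D₃}, by simp [Multiset.subset_iff], hpair h₂₃, by rwa [hlength]⟩
  · exact ⟨{D₃, D₁}, by simp [Multiset.subset_iff], hpair h₃₁, by rwa [hlength]⟩

theorem IsUnbalancedTriple.exists_covers [Finite V] [NeZero n] (hc : IsCyclicEnum C c)
    (hdeg : ∀ x ∈ C.verts, ((G.deleteEdges C.edgeSet).neighborSet x).Subsingleton)
    (hσ : ∀ e ∈ (G.deleteEdges C.edgeSet).edgeSet, edgeSign σ e = 0)
    (hodd : ∑ k, stepSign σ c k = 1) {a : ZMod n} {i j : ℕ}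
    (h : IsUnbalancedTriple (stepSign σ c) (offComponent C c) a i j) :
    ∃ 𝓕 : Multiset G.Subgraph, (∀ D ∈ 𝓕, IsBalancedCircuit G σ D) ∧ Covers G 𝓕 C.edgeSet ∧
      3 * coverLength G 𝓕 ≤ 4 * n + 4 * C.vertsᶜ.ncard + 8 := by
  obtain ⟨r, hr⟩ : ∃ r, i + j + r = n := Nat.le.dest h.lt.le
  have hjr : j + r + i = n := by omega
  have hclose := add_natCast_add_natCast_add_natCast_eq_self hr a
  have h' := h.rotate hodd hr
  have h'' := h'.rotate hodd hjr
  obtain ⟨p₁, p₂, p₃, hp₁, hp₂, hp₃, hlength⟩ := exists_tripod_length_le hdeg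
    (ConnectedComponent.exact h.class_eq₂) (ConnectedComponent.exact h.class_eq₁.symm)
  obtain ⟨D₁, hD₁, hcard₁, hmem₁⟩ := h.isBalancedArc.exists_isBalancedCircuit hc hdeg hσ
    (by push_cast; ring) hp₁
  obtain ⟨D₂, hD₂, hcard₂, hmem₂⟩ := h'.isBalancedArc.exists_isBalancedCircuit hc hdeg hσ
    (by rw [Nat.cast_add, ← add_assoc, hclose]) hp₂
  obtain ⟨D₃, hD₃, hcard₃, hmem₃⟩ := h''.isBalancedArc.exists_isBalancedCircuit hc hdeg hσ
    (by rw [Nat.cast_add, ← add_assoc, hclose]) hp₃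
  have hcover {D D' : G.Subgraph} {A A' : Finset (ZMod n)} (hD : ∀ k ∈ A, stepEdge c k ∈ D.edgeSet)
      (hD' : ∀ k ∈ A', stepEdge c k ∈ D'.edgeSet) (hA : ∀ k, k ∈ A ∨ k ∈ A') :
      C.edgeSet ⊆ D.edgeSet ∪ D'.edgeSet := by
    rw [hc.edgeSet_eq]
    rintro _ ⟨k, rfl⟩
    exact (hA k).imp (hD k) (hD' k)
  obtain ⟨𝓕, hsub, hcov, hle⟩ := exists_covers_of_pairwise_covers
    (hcover hmem₁ hmem₂ (mem_arc_or_mem_arc hr a))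
    (hcover hmem₂ hmem₃ (mem_arc_or_mem_arc hjr _))
    (hcover hmem₃ hmem₁ fun k => by
      simpa only [hclose] using mem_arc_or_mem_arc (by omega : r + i + j = n) (a + i + j) k)
  refine ⟨𝓕, fun D hD => ?_, hcov, by omega⟩
  have hD := hsub hD
  simp only [Multiset.insert_eq_cons, Multiset.mem_cons, Multiset.mem_singleton] at hD
  obtain rfl | rfl | rfl := hD <;> assumption

theorem IsCyclicEnum.exists_covers_of_forall_not_isUnbalancedTriple [Finite V] [NeZero n]
    (hc : IsCyclicEnum C c)
    (hdeg : ∀ x ∈ C.verts, ((G.deleteEdges C.edgeSet).neighborSet x).Subsingleton)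
    (hσ : ∀ e ∈ (G.deleteEdges C.edgeSet).edgeSet, edgeSign σ e = 0)
    (hodd : ∑ k, stepSign σ c k = 1)
    (hno : ∀ a i j, ¬ IsUnbalancedTriple (stepSign σ c) (offComponent C c) a i j)
    (hcov : ∀ e ∈ C.edgeSet, ∃ D : G.Subgraph, IsSignCircuit G σ D ∧ e ∈ D.edgeSet) :
    ∃ 𝓕 : Multiset G.Subgraph, (∀ D ∈ 𝓕, IsBalancedCircuit G σ D) ∧ Covers G 𝓕 C.edgeSet ∧
      coverLength G 𝓕 ≤ 2 * n + C.vertsᶜ.ncard := by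
  obtain ⟨A, a, d, hA, hcovA, hthin⟩ := exists_thin_arc_cover hodd hno fun k =>
    let ⟨_, hD, hk⟩ := hcov _ (hc.stepEdge_mem k)
    hc.exists_isBalancedArc_of_mem_edgeSet hσ hodd hD hk
  have hcircuit : ∀ κ ∈ A, ∃ D : G.Subgraph, IsBalancedCircuit G σ D ∧
      D.edgeSet.ncard ≤ d κ + ((κ.supp \ C.verts).ncard + 1) ∧
      ∀ k ∈ arc (a κ) (d κ), stepEdge c k ∈ D.edgeSet := by
    intro κ hκ
    obtain ⟨harc, hclass⟩ := hA κ hκ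
    obtain ⟨q, hq⟩ := (ConnectedComponent.exact harc.class_eq).exists_isPath
    obtain ⟨D, hD, hcard, hmem⟩ := harc.exists_isBalancedCircuit hc hdeg hσ rfl hq
    have hκ : (G.deleteEdges C.edgeSet).connectedComponentMk (c (a κ + d κ)) = κ :=
      harc.class_eq.trans hclass
    have hlength := length_le_ncard_supp_diff_add_one hdeg hq
    rw [hκ] at hlength
    exact ⟨D, hD, hcard.trans_le (Nat.add_le_add_left hlength _), hmem⟩
  choose! D hD hcard hmem using hcircuit
  refine ⟨A.val.map D, fun D' hD' => ?_, fun e he => ?_, ?_⟩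
  · obtain ⟨κ, hκ, rfl⟩ := Multiset.mem_map.1 hD'
    exact hD κ hκ
  · rw [hc.edgeSet_eq] at he
    obtain ⟨k, rfl⟩ := he
    obtain ⟨κ, hκ, hk⟩ := hcovA k
    exact ⟨D κ, Multiset.mem_map_of_mem D hκ, hmem κ hκ k hk⟩
  · calc coverLength G (A.val.map D) = ∑ κ ∈ A, (D κ).edgeSet.ncard := by
          rw [coverLength, Multiset.map_map]; rfl
      _ ≤ ∑ κ ∈ A, (d κ + ((κ.supp \ C.verts).ncard + 1)) := Finset.sum_le_sum hcard
      _ = ∑ κ ∈ A, d κ + A.card + ∑ κ ∈ A, (κ.supp \ C.verts).ncard := by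
          simp only [Finset.sum_add_distrib, Finset.sum_const, smul_eq_mul, mul_one]
          ring
      _ ≤ 2 * n + C.vertsᶜ.ncard := Nat.add_le_add hthin (sum_ncard_supp_diff_le A _)

theorem IsCubic.two_mul_ncard_edgeSet [Finite V] (hG : IsCubic G) :
    2 * G.edgeSet.ncard = 3 * Nat.card V := by
  classical
  have := Fintype.ofFinite V
  have hdeg (v : V) : G.degree v = 3 := by
    rw [← hG v, ← G.card_neighborSet_eq_degree, Set.ncard_eq_toFinset_card', Set.toFinset_card]
  have hsum := G.sum_degrees_eq_twice_card_edges
  rw [Finset.sum_congr rfl fun v _ => hdeg v, Finset.sum_const, Finset.card_univ, smul_eq_mul,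
    mul_comm] at hsum
  rw [← G.coe_edgeFinset, Set.ncard_coe_finset, Nat.card_eq_fintype_card, hsum]

theorem stmt3_general [Finite V] (hdeg : ∀ v ∈ C.verts, (G.neighborSet v).ncard ≤ 3)
    (hC : IsUnbalancedCircuit G σ C)
    (hcov : ∀ e ∈ C.edgeSet, ∃ D : G.Subgraph, IsSignCircuit G σ D ∧ e ∈ D.edgeSet)
    (hbal : IsBalancedGraph (G.deleteEdges C.edgeSet) σ) :
    ∃ 𝓕 : Multiset G.Subgraph, (∀ D ∈ 𝓕, IsBalancedCircuit G σ D) ∧ Covers G 𝓕 C.edgeSet ∧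
      3 * coverLength G 𝓕 ≤ 4 * Nat.card V + 3 * C.edgeSet.ncard := by
  obtain ⟨f, hf⟩ := hbal.exists_switch
  obtain ⟨n, _, c, hc⟩ := hC.1.exists_isCyclicEnum
  have hsub (x : V) (hx : x ∈ C.verts) := hC.1.subsingleton_neighborSet_deleteEdges hx (hdeg x hx)
  have hodd : ∑ k, stepSign (switch σ f) c k = 1 := by
    rw [hc.sum_stepSign, ZMod.natCast_eq_one_iff_odd]
    exact (isUnbalancedCircuit_switch.2 hC).2
  have hV := Set.ncard_add_ncard_compl C.verts
  rw [hc.ncard_verts] at hV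
  have hn := hc.three_le
  simp only [← isBalancedCircuit_switch (σ := σ) (f := f), ← isSignCircuit_switch (σ := σ) (f := f),
    hc.ncard_edgeSet] at hcov ⊢
  by_cases htriple : ∃ a i j,
      IsUnbalancedTriple (stepSign (switch σ f) c) (offComponent C c) a i j
  · obtain ⟨a, i, j, h⟩ := htriple
    obtain ⟨𝓕, h𝓕, hcov𝓕, hlength⟩ := h.exists_covers hc hsub hf hodd
    exact ⟨𝓕, h𝓕, hcov𝓕, by omega⟩
  · push Not at htriple
    obtain ⟨𝓕, h𝓕, hcov𝓕, hlength⟩ :=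
      hc.exists_covers_of_forall_not_isUnbalancedTriple hsub hf hodd htriple hcov
    exact ⟨𝓕, h𝓕, hcov𝓕, by omega⟩

end Covers

/-- Lemma 2.7. If `C` is an unbalanced circuit of a flow-admissible
cubic signed graph `(G,σ)` and `G − E(C)` is balanced, then `C` can be covered by
sign-circuits of total length at most `(8/9)|E(G)| + |E(C)|`. -/
theorem stmt3 {V : Type*} [Fintype V] (G : SimpleGraph V) (σ : Sym2 V → Bool)
    (hcubic : IsCubic G) (hfa : FlowAdmissible G σ)
    (C : G.Subgraph) (hC : IsUnbalancedCircuit G σ C)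
    (hbal : IsBalancedGraph (G.deleteEdges C.edgeSet) σ) :
    ∃ 𝓕 : Multiset G.Subgraph, (∀ H ∈ 𝓕, IsSignCircuit G σ H) ∧
      Covers G 𝓕 C.edgeSet ∧
      9 * coverLength G 𝓕 ≤ 8 * G.edgeSet.ncard + 9 * C.edgeSet.ncard := by
  obtain ⟨𝓕, h𝓕, hcov, hlength⟩ := stmt3_general (fun v _ => (hcubic v).le) hC
    (fun e he => hfa e (C.edgeSet_subset he)) hbal
  have hedges := hcubic.two_mul_ncard_edgeSet
  exact ⟨𝓕, fun H hH => Or.inl (h𝓕 H hH), hcov, by omega⟩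
end
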